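/- arXiv:2503.13201 — 4 statements merged into one kernel-verified Lean document; each statement's English description precedes it below -/
import Mathlib

section
/- Let c > 2 and let φ : ℝ² → ℝ be a smooth, doubly 2π-periodic, symmetric, positive solution of −Δφ + cφ = φ² which minimizes B_c subject to the constraint ∫|u|³ = ∫φ³ (i.e., B_c(φ) ≤ B_c(u) for every smooth, doubly 2π-periodic, symmetric u : ℝ² → ℝ with ∫|u|³ dxdy = ∫φ³ dxdy). Then the quadratic form of 𝓛₂ = −Δ + c − φ is nonnegative with one-dimensional kernel spanned by φ: for every smooth, doubly 2π-periodic, symmetric v : ℝ² → ℝ one has ∫(|∇v|² + c v² − φ v²) dxdy ≥ 0, with equality if and only if v is a real scalar multiple of φ. -/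
/-!
The proof is the ground state substitution. Since `φ > 0` satisfies `Δφ = (c - φ) φ`, every `v` obeys
the pointwise Picone identity
`|∇v|² + (c - φ) v² = |∇v - (v/φ) ∇φ|² + div ((v²/φ) ∇φ)`.
The divergence of a periodic field integrates to zero, so the quadratic form equals
`∫ |∇v - (v/φ) ∇φ|²` (`integ2_form_eq`). It is therefore nonnegative, and since
`∇v - (v/φ) ∇φ = φ ∇(v/φ)`, it vanishes exactly when `v/φ` is constant.
-/

noncomputable section
open Real MeasureTheory Filter

/-- doubly 2π-periodic -/
def DblPeriodic (u : ℝ → ℝ → ℝ) : Prop :=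
  ∀ x y : ℝ, u (x + 2*π) y = u x y ∧ u x (y + 2*π) = u x y

/-- symmetric: even in each variable separately -/
def SymFun (u : ℝ → ℝ → ℝ) : Prop :=
  ∀ x y : ℝ, u (-x) y = u x y ∧ u x (-y) = u x y

/-- smooth as a function on ℝ² -/
def Smooth2 (u : ℝ → ℝ → ℝ) : Prop :=
  ContDiff ℝ (⊤ : ℕ∞) fun p : ℝ × ℝ => u p.1 p.2

/-- the Laplacian Δu = u_xx + u_yy -/
def lap (u : ℝ → ℝ → ℝ) (x y : ℝ) : ℝ :=
  deriv (fun t => deriv (fun s => u s y) t) x + deriv (fun t => deriv (fun s => u x s) t) y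

/-- integral over the fundamental square [0,2π] × [0,2π] -/
def integ2 (f : ℝ → ℝ → ℝ) : ℝ :=
  ∫ x in (0:ℝ)..(2*π), ∫ y in (0:ℝ)..(2*π), f x y

/-- partial derivative in the first variable -/
def pdx (u : ℝ → ℝ → ℝ) (x y : ℝ) : ℝ := deriv (fun s => u s y) x

/-- partial derivative in the second variable -/
def pdy (u : ℝ → ℝ → ℝ) (x y : ℝ) : ℝ := deriv (fun s => u x s) y

/-- the functional B_c(u) = (1/2)∫(|∇u|² + c u²) dxdy -/
def Bc (c : ℝ) (u : ℝ → ℝ → ℝ) : ℝ :=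
  (1/2) * integ2 (fun x y => (pdx u x y)^2 + (pdy u x y)^2 + c * (u x y)^2)

lemma Smooth2.hasDerivAt_pdx {u : ℝ → ℝ → ℝ} (hu : Smooth2 u) (x y : ℝ) :
    HasDerivAt (fun s => u s y) (pdx u x y) x := by
  have h : ContDiff ℝ (⊤ : ℕ∞) (fun s : ℝ => u s y) :=
    hu.comp (contDiff_id.prodMk contDiff_const)
  exact (h.differentiable (by simp) x).hasDerivAt

lemma Smooth2.hasDerivAt_pdy {u : ℝ → ℝ → ℝ} (hu : Smooth2 u) (x y : ℝ) :
    HasDerivAt (fun s => u x s) (pdy u x y) y := by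
  have h : ContDiff ℝ (⊤ : ℕ∞) (fun s : ℝ => u x s) :=
    hu.comp (contDiff_const.prodMk contDiff_id)
  exact (h.differentiable (by simp) y).hasDerivAt

lemma Smooth2.pdx {u : ℝ → ℝ → ℝ} (hu : Smooth2 u) : Smooth2 (pdx u) := by
  have h : ContDiff ℝ (⊤ : ℕ∞)
      (fun p : ℝ × ℝ => fderiv ℝ (fun p : ℝ × ℝ => u p.1 p.2) p (1, 0)) :=
    (hu.fderiv_right (m := (⊤ : ℕ∞)) (by simp)).clm_apply contDiff_const
  refine (congrArg (ContDiff ℝ (⊤ : ℕ∞)) (funext fun p => ?_)).mpr h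
  have h1 : HasDerivAt (fun s : ℝ => (s, p.2)) ((1 : ℝ), (0 : ℝ)) p.1 :=
    (hasDerivAt_id p.1).prodMk (hasDerivAt_const p.1 p.2)
  have h2 : HasFDerivAt (fun p : ℝ × ℝ => u p.1 p.2) _ (p.1, p.2) :=
    (hu.differentiable (by simp) (p.1, p.2)).hasFDerivAt
  exact (h2.comp_hasDerivAt p.1 h1).deriv

lemma Smooth2.pdy {u : ℝ → ℝ → ℝ} (hu : Smooth2 u) : Smooth2 (pdy u) := by
  have h : ContDiff ℝ (⊤ : ℕ∞)
      (fun p : ℝ × ℝ => fderiv ℝ (fun p : ℝ × ℝ => u p.1 p.2) p (0, 1)) :=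
    (hu.fderiv_right (m := (⊤ : ℕ∞)) (by simp)).clm_apply contDiff_const
  refine (congrArg (ContDiff ℝ (⊤ : ℕ∞)) (funext fun p => ?_)).mpr h
  have h1 : HasDerivAt (fun s : ℝ => (p.1, s)) ((0 : ℝ), (1 : ℝ)) p.2 :=
    (hasDerivAt_const p.2 p.1).prodMk (hasDerivAt_id p.2)
  have h2 : HasFDerivAt (fun p : ℝ × ℝ => u p.1 p.2) _ (p.1, p.2) :=
    (hu.differentiable (by simp) (p.1, p.2)).hasFDerivAt
  exact (h2.comp_hasDerivAt p.2 h1).deriv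

lemma DblPeriodic.pdx {u : ℝ → ℝ → ℝ} (hu : DblPeriodic u) : DblPeriodic (pdx u) := by
  intro x y
  constructor
  · have h : (fun s => u (s + 2*π) y) = fun s => u s y := funext fun s => (hu s y).1
    have h2 := deriv_comp_add_const (fun s => u s y) (2*π) x
    rw [h] at h2
    exact h2.symm
  · have h : (fun s => u s (y + 2*π)) = fun s => u s y := funext fun s => (hu s y).2
    simp only [_root_.pdx, h]

lemma DblPeriodic.pdy {u : ℝ → ℝ → ℝ} (hu : DblPeriodic u) : DblPeriodic (pdy u) := by
  intro x y
  constructor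
  · have h : (fun s => u (x + 2*π) s) = fun s => u x s := funext fun s => (hu x s).1
    simp only [_root_.pdy, h]
  · have h : (fun s => u x (s + 2*π)) = fun s => u x s := funext fun s => (hu x s).2
    have h2 := deriv_comp_add_const (fun s => u x s) (2*π) y
    rw [h] at h2
    exact h2.symm

lemma continuous_inner_integral {f : ℝ → ℝ → ℝ} (hf : Continuous fun p : ℝ × ℝ => f p.1 p.2) :
    Continuous fun x => ∫ y in (0:ℝ)..(2*π), f x y :=
  intervalIntegral.continuous_parametric_intervalIntegral_of_continuous' hf _ _

lemma integ2_add {f g : ℝ → ℝ → ℝ} (hf : Continuous fun p : ℝ × ℝ => f p.1 p.2)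
    (hg : Continuous fun p : ℝ × ℝ => g p.1 p.2) :
    integ2 (fun x y => f x y + g x y) = integ2 f + integ2 g := by
  have h : ∀ x, ∫ y in (0:ℝ)..(2*π), (f x y + g x y) =
      (∫ y in (0:ℝ)..(2*π), f x y) + ∫ y in (0:ℝ)..(2*π), g x y := fun x =>
    intervalIntegral.integral_add
      ((hf.comp (Continuous.prodMk_right x)).intervalIntegrable _ _)
      ((hg.comp (Continuous.prodMk_right x)).intervalIntegrable _ _)
  simp only [integ2, h]
  exact intervalIntegral.integral_add
    ((continuous_inner_integral hf).intervalIntegrable _ _)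
    ((continuous_inner_integral hg).intervalIntegrable _ _)

lemma integ2_swap {f : ℝ → ℝ → ℝ} (hf : Continuous fun p : ℝ × ℝ => f p.1 p.2) :
    integ2 f = ∫ y in (0:ℝ)..(2*π), ∫ x in (0:ℝ)..(2*π), f x y := by
  refine intervalIntegral_intervalIntegral_swap ?_
  have hK : IsCompact (Set.uIcc (0:ℝ) (2*π) ×ˢ Set.uIcc (0:ℝ) (2*π)) :=
    isCompact_uIcc.prod isCompact_uIcc
  exact (hf.continuousOn.integrableOn_compact hK).mono_set
    (Set.prod_mono Set.uIoc_subset_uIcc Set.uIoc_subset_uIcc)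

lemma integ2_pdy_eq_zero {u : ℝ → ℝ → ℝ} (hu : Smooth2 u) (hp : DblPeriodic u) :
    integ2 (pdy u) = 0 := by
  have h : ∀ x, ∫ y in (0:ℝ)..(2*π), pdy u x y = 0 := by
    intro x
    rw [intervalIntegral.integral_eq_sub_of_hasDerivAt (fun y _ => hu.hasDerivAt_pdy x y)
      ((hu.pdy.continuous.comp (Continuous.prodMk_right x)).intervalIntegrable _ _)]
    have := (hp x 0).2
    rw [zero_add] at this
    simp [this]
  simp [integ2, h]

lemma integ2_pdx_eq_zero {u : ℝ → ℝ → ℝ} (hu : Smooth2 u) (hp : DblPeriodic u) :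
    integ2 (pdx u) = 0 := by
  have h : ∀ y, ∫ x in (0:ℝ)..(2*π), pdx u x y = 0 := by
    intro y
    rw [intervalIntegral.integral_eq_sub_of_hasDerivAt (fun x _ => hu.hasDerivAt_pdx x y)
      ((hu.pdx.continuous.comp (Continuous.prodMk_left y)).intervalIntegrable _ _)]
    have := (hp 0 y).1
    rw [zero_add] at this
    simp [this]
  rw [integ2_swap hu.pdx.continuous]
  simp [h]

lemma integ2_nonneg {f : ℝ → ℝ → ℝ} (h0 : ∀ x y, 0 ≤ f x y) : 0 ≤ integ2 f :=
  intervalIntegral.integral_nonneg (by positivity) fun _ _ =>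
    intervalIntegral.integral_nonneg (by positivity) fun _ _ => h0 _ _

lemma eq_zero_of_integ2_eq_zero {f : ℝ → ℝ → ℝ} (hf : Continuous fun p : ℝ × ℝ => f p.1 p.2)
    (h0 : ∀ x y, 0 ≤ f x y) (h : integ2 f = 0) {x y : ℝ} (hx : x ∈ Set.Icc 0 (2*π))
    (hy : y ∈ Set.Icc 0 (2*π)) : f x y = 0 := by
  by_contra hne
  have hlt : 0 < f x y := lt_of_le_of_ne (h0 x y) (Ne.symm hne)
  have h1 : 0 < ∫ y in (0:ℝ)..(2*π), f x y :=
    intervalIntegral.integral_pos (by positivity)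
      (hf.comp (Continuous.prodMk_right x)).continuousOn (fun _ _ => h0 _ _) ⟨y, hy, hlt⟩
  have h2 : 0 < integ2 f :=
    intervalIntegral.integral_pos (by positivity)
      (continuous_inner_integral hf).continuousOn
      (fun _ _ => intervalIntegral.integral_nonneg (by positivity) fun _ _ => h0 _ _) ⟨x, hx, h1⟩
  exact h2.ne' h

/-- The integrated Picone identity. -/
lemma integ2_form_eq {c : ℝ} {φ v : ℝ → ℝ → ℝ} (hs : Smooth2 φ) (hper : DblPeriodic φ)
    (hpos : ∀ x y : ℝ, 0 < φ x y)
    (heq : ∀ x y : ℝ, -(lap φ x y) + c * φ x y = (φ x y)^2)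
    (hv : Smooth2 v) (hvp : DblPeriodic v) :
    integ2 (fun x y =>
        (pdx v x y)^2 + (pdy v x y)^2 + c * (v x y)^2 - φ x y * (v x y)^2) =
      integ2 (fun x y => (pdx v x y - v x y * pdx φ x y / φ x y)^2 +
        (pdy v x y - v x y * pdy φ x y / φ x y)^2) := by
  have hne : ∀ p : ℝ × ℝ, φ p.1 p.2 ≠ 0 := fun p => (hpos _ _).ne'
  have hFs : Smooth2 (fun x y => v x y ^ 2 * pdx φ x y / φ x y) :=
    ((ContDiff.pow hv 2).mul hs.pdx).div hs hne
  have hGs : Smooth2 (fun x y => v x y ^ 2 * pdy φ x y / φ x y) :=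
    ((ContDiff.pow hv 2).mul hs.pdy).div hs hne
  have hFp : DblPeriodic (fun x y => v x y ^ 2 * pdx φ x y / φ x y) := fun x y => by
    simp only [(hvp x y).1, (hvp x y).2, (hper x y).1, (hper x y).2, (hper.pdx x y).1,
      (hper.pdx x y).2, and_self]
  have hGp : DblPeriodic (fun x y => v x y ^ 2 * pdy φ x y / φ x y) := fun x y => by
    simp only [(hvp x y).1, (hvp x y).2, (hper x y).1, (hper x y).2, (hper.pdy x y).1,
      (hper.pdy x y).2, and_self]
  have hc : Continuous fun p : ℝ × ℝ =>
      (pdx v p.1 p.2 - v p.1 p.2 * pdx φ p.1 p.2 / φ p.1 p.2)^2 +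
        (pdy v p.1 p.2 - v p.1 p.2 * pdy φ p.1 p.2 / φ p.1 p.2)^2 :=
    ((hv.pdx.continuous.sub ((hv.continuous.mul hs.pdx.continuous).div hs.continuous hne)).pow 2).add
      ((hv.pdy.continuous.sub
        ((hv.continuous.mul hs.pdy.continuous).div hs.continuous hne)).pow 2)
  have hpt : ∀ x y, (pdx v x y)^2 + (pdy v x y)^2 + c * (v x y)^2 - φ x y * (v x y)^2 =
      ((pdx v x y - v x y * pdx φ x y / φ x y)^2 + (pdy v x y - v x y * pdy φ x y / φ x y)^2) +
      (pdx (fun x y => v x y ^ 2 * pdx φ x y / φ x y) x y +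
        pdy (fun x y => v x y ^ 2 * pdy φ x y / φ x y) x y) := by
    intro x y
    have h0 : φ x y ≠ 0 := (hpos x y).ne'
    have e1 := ((((hv.hasDerivAt_pdx x y).fun_pow 2).fun_mul (hs.pdx.hasDerivAt_pdx x y)).fun_div
      (hs.hasDerivAt_pdx x y) h0).deriv
    have e2 := ((((hv.hasDerivAt_pdy x y).fun_pow 2).fun_mul (hs.pdy.hasDerivAt_pdy x y)).fun_div
      (hs.hasDerivAt_pdy x y) h0).deriv
    have e3 : pdx (fun x y => v x y ^ 2 * pdx φ x y / φ x y) x y = _ := e1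
    have e4 : pdy (fun x y => v x y ^ 2 * pdy φ x y / φ x y) x y = _ := e2
    have hl : pdx (pdx φ) x y = c * φ x y - φ x y ^ 2 - pdy (pdy φ) x y := by
      have hlap : lap φ x y = pdx (pdx φ) x y + pdy (pdy φ) x y := rfl
      have := heq x y
      rw [hlap] at this
      linarith
    rw [e3, e4, hl]
    field_simp
    ring
  simp only [hpt]
  rw [integ2_add hc (hFs.pdx.continuous.add hGs.pdy.continuous),
    integ2_add hFs.pdx.continuous hGs.pdy.continuous,
    integ2_pdx_eq_zero hFs hFp, integ2_pdy_eq_zero hGs hGp, add_zero, add_zero]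

/-- For a positive constrained minimizer φ of B_c (c > 2) solving −Δφ + cφ = φ², the
quadratic form of 𝓛₂ = −Δ + c − φ is nonnegative, vanishing exactly on multiples of φ. -/
theorem Ltwo_nonneg_kernel (c : ℝ) (hc : 2 < c) (φ : ℝ → ℝ → ℝ)
    (hs : Smooth2 φ) (hper : DblPeriodic φ) (hsym : SymFun φ)
    (hpos : ∀ x y : ℝ, 0 < φ x y)
    (heq : ∀ x y : ℝ, -(lap φ x y) + c * φ x y = (φ x y)^2)
    (hmin : ∀ u : ℝ → ℝ → ℝ, Smooth2 u → DblPeriodic u → SymFun u →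
      integ2 (fun x y => |u x y|^3) = integ2 (fun x y => (φ x y)^3) →
      Bc c φ ≤ Bc c u) :
    ∀ v : ℝ → ℝ → ℝ, Smooth2 v → DblPeriodic v → SymFun v →
      0 ≤ integ2 (fun x y =>
        (pdx v x y)^2 + (pdy v x y)^2 + c * (v x y)^2 - φ x y * (v x y)^2) ∧
      (integ2 (fun x y =>
        (pdx v x y)^2 + (pdy v x y)^2 + c * (v x y)^2 - φ x y * (v x y)^2) = 0 ↔
        ∃ α : ℝ, ∀ x y : ℝ, v x y = α * φ x y) := by
  intro v hv hvp _
  have hne : ∀ p : ℝ × ℝ, φ p.1 p.2 ≠ 0 := fun p => (hpos _ _).ne'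
  rw [integ2_form_eq hs hper hpos heq hv hvp]
  refine ⟨integ2_nonneg fun x y => by positivity, fun h => ?_, ?_⟩
  · have hc : Continuous fun p : ℝ × ℝ =>
        (pdx v p.1 p.2 - v p.1 p.2 * pdx φ p.1 p.2 / φ p.1 p.2)^2 +
          (pdy v p.1 p.2 - v p.1 p.2 * pdy φ p.1 p.2 / φ p.1 p.2)^2 :=
      ((hv.pdx.continuous.sub
        ((hv.continuous.mul hs.pdx.continuous).div hs.continuous hne)).pow 2).add
        ((hv.pdy.continuous.sub
          ((hv.continuous.mul hs.pdy.continuous).div hs.continuous hne)).pow 2)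
    have hz : ∀ x ∈ Set.Icc 0 (2*π), ∀ y ∈ Set.Icc 0 (2*π), _ := fun x hx y hy =>
      eq_zero_of_integ2_eq_zero hc (fun x y => by positivity) h hx hy
    have hdx : ∀ x y, HasDerivAt (fun s => v s y / φ s y)
        ((pdx v x y - v x y * pdx φ x y / φ x y) / φ x y) x := fun x y => by
      have h0 := (hpos x y).ne'
      exact ((hv.hasDerivAt_pdx x y).fun_div (hs.hasDerivAt_pdx x y) h0).congr_deriv
        (by field_simp)
    have hdy : ∀ x y, HasDerivAt (fun s => v x s / φ x s)
        ((pdy v x y - v x y * pdy φ x y / φ x y) / φ x y) y := fun x y => by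
      have h0 := (hpos x y).ne'
      exact ((hv.hasDerivAt_pdy x y).fun_div (hs.hasDerivAt_pdy x y) h0).congr_deriv
        (by field_simp)
    -- On the square, `v / φ` is constant along horizontal and vertical segments.
    have hx0 : ∀ y ∈ Set.Icc 0 (2*π), ∀ x ∈ Set.Icc 0 (2*π),
        v x y / φ x y = v 0 y / φ 0 y := fun y hy =>
      constant_of_has_deriv_right_zero (f := fun s => v s y / φ s y)
        (fun x _ => (hdx x y).continuousAt.continuousWithinAt) fun x hx => by
          have h1 : pdx v x y - v x y * pdx φ x y / φ x y = 0 := by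
            have := hz x (Set.Ico_subset_Icc_self hx) y hy
            nlinarith [sq_nonneg (pdx v x y - v x y * pdx φ x y / φ x y),
              sq_nonneg (pdy v x y - v x y * pdy φ x y / φ x y)]
          simpa only [h1, zero_div] using (hdx x y).hasDerivWithinAt (s := Set.Ici x)
    have hmem0 : (0:ℝ) ∈ Set.Icc 0 (2*π) := ⟨le_rfl, by positivity⟩
    have hy0 : ∀ y ∈ Set.Icc 0 (2*π), v 0 y / φ 0 y = v 0 0 / φ 0 0 :=
      constant_of_has_deriv_right_zero (f := fun s => v 0 s / φ 0 s)
        (fun y _ => (hdy 0 y).continuousAt.continuousWithinAt) fun y hy => by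
          have h1 : pdy v 0 y - v 0 y * pdy φ 0 y / φ 0 y = 0 := by
            have := hz 0 hmem0 y (Set.Ico_subset_Icc_self hy)
            nlinarith [sq_nonneg (pdx v 0 y - v 0 y * pdx φ 0 y / φ 0 y),
              sq_nonneg (pdy v 0 y - v 0 y * pdy φ 0 y / φ 0 y)]
          simpa only [h1, zero_div] using (hdy 0 y).hasDerivWithinAt (s := Set.Ici y)
    refine ⟨v 0 0 / φ 0 0, fun x y => ?_⟩
    have hpx : Function.Periodic (fun s => v s y / φ s y) (2*π) := fun s => by
      simp only [(hvp s y).1, (hper s y).1]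
    obtain ⟨x', hx', ex⟩ := hpx.exists_mem_Ico₀ (by positivity) x
    have hpy : Function.Periodic (fun s => v x' s / φ x' s) (2*π) := fun s => by
      simp only [(hvp x' s).2, (hper x' s).2]
    obtain ⟨y', hy', ey⟩ := hpy.exists_mem_Ico₀ (by positivity) y
    have e : v x y / φ x y = v 0 0 / φ 0 0 :=
      ex.trans (ey.trans ((hx0 y' (Set.Ico_subset_Icc_self hy') x'
        (Set.Ico_subset_Icc_self hx')).trans (hy0 y' (Set.Ico_subset_Icc_self hy'))))
    rw [← e, div_mul_cancel₀ _ (hpos x y).ne']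
  · rintro ⟨α, hα⟩
    have e1 : ∀ x y, pdx v x y = α * pdx φ x y := fun x y => by
      simp only [pdx, hα]
      exact ((hs.hasDerivAt_pdx x y).const_mul α).deriv
    have e2 : ∀ x y, pdy v x y = α * pdy φ x y := fun x y => by
      simp only [pdy, hα]
      exact ((hs.hasDerivAt_pdy x y).const_mul α).deriv
    have e3 : ∀ x y, (pdx v x y - v x y * pdx φ x y / φ x y)^2 +
        (pdy v x y - v x y * pdy φ x y / φ x y)^2 = 0 := fun x y => by
      have := (hpos x y).ne'
      rw [e1, e2, hα]
      field_simp
      ring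
    simp [integ2, e3]
end
end

section
/- There exist a₀ > 0 and C > 0 such that for every a ∈ (0,a₀) there exist a real number c(a) and two smooth, doubly 2π-periodic functions φ₊, φ₋ : ℝ² → ℝ, each satisfying the evenness condition φ±(−x,−y) = φ±(x,y) for all (x,y) and each solving −Δφ± + c(a)φ± = φ±² on ℝ², such that for all (x,y) ∈ ℝ²: |φ₊(x,y) − [2 + a cos(x+y) + (a²/6)(1 + (1/2)cos(2x+2y)) + (a³/192)cos(3x+3y)]| ≤ C a⁴ and |φ₋(x,y) − [2 + a cos(x−y) + (a²/6)(1 + (1/2)cos(2x−2y)) + (a³/192)cos(3x−3y)]| ≤ C a⁴, and moreover |c(a) − (2 + (5/12)a²)| ≤ C a⁴. -/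
/-!
Waves depending on one diagonal variable reduce the problem to one dimension: `φ(x, y) = g(x ± y)`
solves `-Δφ + c φ = φ²` as soon as `-2 g'' + c g = g²` (`lap_add`, `lap_sub`). The even `2π`-periodic
solutions `g` are cnoidal waves, and they are written down explicitly as
`g = A + 12 (log τ)''` with the theta function `τ(θ) = ∑ₙ q^{n²} e^{inθ}`.

The equation for `g` follows from Hirota's bilinear equation `(D⁴ + α D² + β) τ·τ = 0`
(`bilinear`, `profile_ode`). Expanding `τ·τ` in exponentials and using
`n² + m² = ((n+m)² + (n-m)²)/2`, the coefficient of `e^{iNθ}` depends on `N` only through a factor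
and the parity of `N`; hence the bilinear equation follows from two linear scalar equations for
`(α, β)`, solvable for small `q`. Then `rad = √(α² - 12 β)`, `A = α + rad` and `c = 2 rad`.

The nome is `q = -(a/24 - (a/24)³)`, which makes the first Fourier coefficient of `g` equal to `a`
up to `O(a⁵)`. The series in `q` are truncated at order `4` by `tail_bound`, and the expansions of
`g` and `c` modulo `O(a⁴)`, uniform in `θ`, are computed with the calculus `Approx`, which is stable
under sums, products, inverses and square roots (`profile_approx`, `freq_approx`).
-/

noncomputable section
open Real MeasureTheory Filter

/-- even under the simultaneous reflection (x,y) ↦ (−x,−y) -/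
def EvenFun2 (u : ℝ → ℝ → ℝ) : Prop :=
  ∀ x y : ℝ, u (-x) (-y) = u x y

/-! ### Summability and truncation of series in the nome -/

/-- Polynomial weights are summable against geometric decay over `ℤ`. -/
lemma summable_weight (k : ℕ) :
    Summable fun n : ℤ => (2 * (n.natAbs : ℝ) + 1) ^ k * (1 / 2 : ℝ) ^ n.natAbs := by
  have hnat : Summable fun n : ℕ => (2 * (n : ℝ) + 1) ^ k * (1 / 2 : ℝ) ^ n := by
    have h := (summable_pow_mul_geometric_of_norm_lt_one k
      (show ‖(1 / 2 : ℝ)‖ < 1 by norm_num))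
    have h' := ((summable_nat_add_iff 1).2 h).mul_left (3 ^ k * 2 : ℝ)
    refine Summable.of_nonneg_of_le (fun n => by positivity) (fun n => ?_) h'
    have : (2 * (n : ℝ) + 1) ^ k ≤ (3 * ((n : ℝ) + 1)) ^ k := by
      apply pow_le_pow_left₀ (by positivity)
      have : (0 : ℝ) ≤ n := Nat.cast_nonneg n
      linarith
    calc (2 * (n : ℝ) + 1) ^ k * (1 / 2 : ℝ) ^ n
        ≤ (3 * ((n : ℝ) + 1)) ^ k * (1 / 2 : ℝ) ^ n := by gcongr
      _ = _ := by push_cast; rw [mul_pow, pow_succ]; ring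
  rw [summable_int_iff_summable_nat_and_neg]
  constructor <;> simpa using hnat

lemma summable_half_pow {E : Type*} [NormedAddCommGroup E] {e : ℤ → ℕ}
    (he : ∀ n, n.natAbs ≤ e n + 1) {b : ℤ → E} {k : ℕ}
    (hb : ∀ n, ‖b n‖ ≤ (2 * (n.natAbs : ℝ) + 1) ^ k) :
    Summable fun n : ℤ => (1 / 2 : ℝ) ^ e n * ‖b n‖ := by
  refine Summable.of_nonneg_of_le (fun n => by positivity) (fun n => ?_)
    ((summable_weight k).mul_left 2)
  have h1 : (1 / 2 : ℝ) ^ (e n + 1) ≤ (1 / 2) ^ n.natAbs :=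
    pow_le_pow_of_le_one (by norm_num) (by norm_num) (he n)
  calc (1 / 2 : ℝ) ^ e n * ‖b n‖ = 2 * ((1 / 2 : ℝ) ^ (e n + 1) * ‖b n‖) := by
        rw [pow_succ]; ring
    _ ≤ 2 * ((1 / 2) ^ n.natAbs * (2 * (n.natAbs : ℝ) + 1) ^ k) := by
        gcongr
        exact hb n
    _ = _ := by ring

lemma summable_norm_nome {E : Type*} [NormedAddCommGroup E] [NormedSpace ℝ E] {e : ℤ → ℕ}
    (he : ∀ n, n.natAbs ≤ e n + 1) {b : ℤ → E} {k : ℕ}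
    (hb : ∀ n, ‖b n‖ ≤ (2 * (n.natAbs : ℝ) + 1) ^ k) {q : ℝ} (hq : |q| ≤ 1 / 2) :
    Summable fun n : ℤ => ‖q ^ e n • b n‖ := by
  refine Summable.of_nonneg_of_le (fun n => norm_nonneg _) (fun n => ?_)
    (summable_half_pow he hb)
  rw [norm_smul, norm_pow, Real.norm_eq_abs]
  gcongr

/-- Truncation of a power series in the nome: dropping the terms of exponent at least `4` costs
`O(q ^ 4)`, with a constant that depends only on the growth order `k` of the coefficients. -/
lemma tail_bound {e : ℤ → ℕ} (he : ∀ n, n.natAbs ≤ e n + 1) (s : Finset ℤ)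
    (hs : ∀ n ∉ s, 4 ≤ e n) (k : ℕ) :
    ∃ M : ℝ, ∀ {E : Type} [NormedAddCommGroup E] [NormedSpace ℝ E] [CompleteSpace E],
      ∀ b : ℤ → E, (∀ n, ‖b n‖ ≤ (2 * (n.natAbs : ℝ) + 1) ^ k) → ∀ q : ℝ, |q| ≤ 1 / 2 →
      ‖∑' n, q ^ e n • b n - ∑ n ∈ s, q ^ e n • b n‖ ≤ M * q ^ 4 := by
  have hw : Summable fun n : ℤ =>
      (1 / 2 : ℝ) ^ e n * ‖(2 * (n.natAbs : ℝ) + 1) ^ k‖ :=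
    summable_half_pow (b := fun n : ℤ => (2 * (n.natAbs : ℝ) + 1) ^ k) he (k := k) (fun n => by
      rw [Real.norm_of_nonneg (by positivity)])
  refine ⟨16 * ∑' n : ((s : Set ℤ)ᶜ : Set ℤ),
    (1 / 2 : ℝ) ^ e n * ‖(2 * ((n : ℤ).natAbs : ℝ) + 1) ^ k‖, ?_⟩
  intro E _ _ _ b hb q hq
  have hsum := (summable_norm_nome he hb hq).of_norm
  rw [← hsum.sum_add_tsum_subtype_compl s, add_sub_cancel_left]
  have hS := ((hw.subtype ((s : Set ℤ)ᶜ)).mul_left (16 * q ^ 4)).hasSum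
  rw [tsum_mul_left] at hS
  refine (tsum_of_norm_bounded hS fun n => ?_).trans (le_of_eq ?_)
  · obtain ⟨n, hn⟩ := n
    have h4 : 4 ≤ e n := hs n fun h => hn (Finset.mem_coe.2 h)
    obtain ⟨d, hd⟩ := Nat.exists_eq_add_of_le h4
    have hbn : ‖b n‖ ≤ ‖(2 * (n.natAbs : ℝ) + 1) ^ k‖ := by
      rw [Real.norm_of_nonneg (by positivity)]; exact hb n
    have hq4 : |q| ^ 4 = q ^ 4 := by rw [← abs_pow]; exact abs_of_nonneg (by positivity)
    simp only [Function.comp, norm_smul, norm_pow, Real.norm_eq_abs] at hbn ⊢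
    rw [hd, pow_add, pow_add, hq4]
    calc q ^ 4 * |q| ^ d * ‖b n‖ ≤ q ^ 4 * (1 / 2) ^ d * |2 * (n.natAbs : ℝ) + 1| ^ k := by
          gcongr
      _ = _ := by ring
  · exact mul_right_comm _ _ _

/-! ### The theta function and its bilinear equation -/

/-- The Fourier mode `(in)^k e^{inθ}` of the `k`-th derivative of the theta function. -/
def mode (k : ℕ) (θ : ℝ) (n : ℤ) : ℂ :=
  (Complex.I * n) ^ k * Complex.exp (Complex.I * n * θ)

/-- `k`-th derivative of the theta function `θ ↦ ∑ₙ q^{n²} e^{inθ}`, written as a series. -/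
def thetaC (q : ℝ) (k : ℕ) (θ : ℝ) : ℂ := ∑' n : ℤ, q ^ (n.natAbs ^ 2) • mode k θ n

/-- The real-valued version of `thetaC`, see `thetaC_eq`. -/
def theta (q : ℝ) (k : ℕ) (θ : ℝ) : ℝ := (thetaC q k θ).re

/-- The exponent `r (r + 1)`, nonnegative for every integer `r`. -/
def obl (r : ℤ) : ℕ := (r * (r + 1)).toNat

/-- The sum `∑_{j even} j^k q^{j²/2}`, with `j = 2r`. -/
def evenSum (q : ℝ) (k : ℕ) : ℝ := ∑' r : ℤ, q ^ (2 * r.natAbs ^ 2) • (2 * (r : ℝ)) ^ k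

/-- The sum `∑_{j odd} j^k q^{(j²-1)/2}`, with `j = 2r + 1`. -/
def oddSum (q : ℝ) (k : ℕ) : ℝ := ∑' r : ℤ, q ^ (2 * obl r) • (2 * (r : ℝ) + 1) ^ k

lemma obl_cast (r : ℤ) : (obl r : ℤ) = r * (r + 1) := by
  refine Int.toNat_of_nonneg ?_
  rcases le_or_gt 0 r with h | h
  · positivity
  · nlinarith

lemma exp_sq (n : ℤ) : n.natAbs ≤ n.natAbs ^ 2 + 1 := by nlinarith

lemma exp_two_sq (n : ℤ) : n.natAbs ≤ 2 * n.natAbs ^ 2 + 1 := by nlinarith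

lemma exp_obl (n : ℤ) : n.natAbs ≤ 2 * obl n + 1 := by
  have h := obl_cast n
  zify
  rw [h]
  rcases abs_cases n with ⟨h1, h2⟩ | ⟨h1, h2⟩ <;> rw [h1] <;> nlinarith

lemma natAbs_real (n : ℤ) : (n.natAbs : ℝ) = |(n : ℝ)| := by
  rw [Nat.cast_natAbs, Int.cast_abs]

lemma mode_bound (k : ℕ) (θ : ℝ) (n : ℤ) : ‖mode k θ n‖ ≤ (2 * (n.natAbs : ℝ) + 1) ^ k := by
  have h : Complex.I * n * θ = ((n * θ : ℝ) : ℂ) * Complex.I := by push_cast; ring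
  rw [mode, norm_mul, h, Complex.norm_exp_ofReal_mul_I, mul_one, norm_pow, norm_mul,
    Complex.norm_I, one_mul, Complex.norm_intCast, natAbs_real]
  gcongr
  linarith [abs_nonneg (n : ℝ)]

lemma even_bound (k : ℕ) (r : ℤ) : ‖(2 * (r : ℝ)) ^ k‖ ≤ (2 * (r.natAbs : ℝ) + 1) ^ k := by
  rw [natAbs_real, norm_pow, Real.norm_eq_abs, abs_mul, abs_two]
  gcongr
  linarith

lemma odd_bound (k : ℕ) (r : ℤ) : ‖(2 * (r : ℝ) + 1) ^ k‖ ≤ (2 * (r.natAbs : ℝ) + 1) ^ k := by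
  rw [natAbs_real, norm_pow, Real.norm_eq_abs]
  gcongr
  refine (abs_add_le _ _).trans ?_
  rw [abs_mul, abs_two, abs_one]

variable {q : ℝ}

lemma summable_norm_mode (hq : |q| ≤ 1 / 2) (k : ℕ) (θ : ℝ) :
    Summable fun n : ℤ => ‖q ^ (n.natAbs ^ 2) • mode k θ n‖ :=
  summable_norm_nome exp_sq (mode_bound k θ) hq

lemma hasDerivAt_mode (k : ℕ) (n : ℤ) (θ : ℝ) :
    HasDerivAt (fun t => mode k t n) (mode (k + 1) θ n) θ := by
  have h1 : HasDerivAt (fun t : ℝ => Complex.I * n * (t : ℂ)) (Complex.I * n) θ := by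
    simpa using (Complex.ofRealCLM.hasDerivAt (x := θ)).const_mul (Complex.I * n)
  have h2 := h1.cexp.const_mul ((Complex.I * n) ^ k)
  exact h2.congr_deriv (by simp only [mode, pow_succ]; ring)

lemma hasDerivAt_thetaC (hq : |q| ≤ 1 / 2) (k : ℕ) (θ : ℝ) :
    HasDerivAt (thetaC q k) (thetaC q (k + 1) θ) θ := by
  have hu := summable_half_pow (b := fun n : ℤ => (2 * (n.natAbs : ℝ) + 1) ^ (k + 1)) exp_sq
    (k := k + 1) (fun n => by rw [Real.norm_of_nonneg (by positivity)])
  refine hasDerivAt_tsum hu (fun n t => (hasDerivAt_mode k n t).const_smul (q ^ (n.natAbs ^ 2)))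
    (fun n t => ?_) (summable_norm_mode hq k 0).of_norm θ
  rw [norm_smul, norm_pow, Real.norm_eq_abs]
  gcongr
  rw [Real.norm_of_nonneg (by positivity)]
  exact mode_bound _ _ _

lemma conj_mode (k : ℕ) (θ : ℝ) (n : ℤ) :
    (starRingEnd ℂ) (mode k θ n) = mode k θ (-n) := by
  simp only [mode, map_mul, map_pow, Complex.conj_I, Complex.conj_ofReal, ← Complex.exp_conj,
    map_intCast]
  push_cast
  ring_nf

/-- The theta function and its derivatives are real, by the symmetry `n ↦ -n`. -/
lemma thetaC_eq (k : ℕ) (θ : ℝ) : thetaC q k θ = theta q k θ := by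
  refine (Complex.conj_eq_iff_re.1 ?_).symm
  rw [thetaC, Complex.conj_tsum, ← (Equiv.neg ℤ).tsum_eq]
  refine tsum_congr fun n => ?_
  rw [Complex.real_smul, map_mul, Complex.conj_ofReal, conj_mode, ← Complex.real_smul]
  simp

lemma hasDerivAt_theta (hq : |q| ≤ 1 / 2) (k : ℕ) (θ : ℝ) :
    HasDerivAt (theta q k) (theta q (k + 1) θ) θ :=
  Complex.reCLM.hasFDerivAt.comp_hasDerivAt θ (hasDerivAt_thetaC hq k θ)

lemma contDiff_theta (hq : |q| ≤ 1 / 2) (k : ℕ) : ContDiff ℝ (⊤ : ℕ∞) (theta q k) := by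
  rw [contDiff_infty]
  intro m
  induction m generalizing k with
  | zero =>
    exact contDiff_zero.2 (continuous_iff_continuousAt.2 fun θ =>
      (hasDerivAt_theta hq k θ).continuousAt)
  | succ m ih =>
    have hd : deriv (theta q k) = theta q (k + 1) :=
      funext fun θ => (hasDerivAt_theta hq k θ).deriv
    push_cast
    rw [contDiff_succ_iff_deriv]
    exact ⟨fun θ => (hasDerivAt_theta hq k θ).differentiableAt, by simp, hd ▸ ih (k + 1)⟩

lemma theta_periodic (k : ℕ) (θ : ℝ) : theta q k (θ + 2 * π) = theta q k θ := by
  rw [theta, theta, thetaC, thetaC]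
  congr 2
  ext1 n
  congr 1
  rw [mode, mode]
  congr 1
  rw [Complex.exp_eq_exp_iff_exists_int]
  exact ⟨n, by push_cast; ring⟩

lemma theta_neg (k : ℕ) (θ : ℝ) : theta q k (-θ) = (-1) ^ k * theta q k θ := by
  have : thetaC q k (-θ) = (-1) ^ k * thetaC q k θ := by
    rw [thetaC, thetaC, ← (Equiv.neg ℤ).tsum_eq, ← tsum_mul_left]
    refine tsum_congr fun n => ?_
    rw [mul_smul_comm]
    simp only [Equiv.neg_apply, Int.natAbs_neg, mode]
    congr 1
    rw [← mul_assoc, ← mul_pow]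
    push_cast
    congr 1
    · congr 1; ring
    · congr 1; ring
  rw [thetaC_eq, thetaC_eq] at this
  exact_mod_cast this

/-- The change of indices `(n, m) = (p + r, p - r)` or `(p + r + 1, p - r)`, according to the
parity of `n + m`. -/
def parityMap : (ℤ × ℤ) ⊕ (ℤ × ℤ) → ℤ × ℤ
  | Sum.inl z => (z.1 + z.2, z.1 - z.2)
  | Sum.inr z => (z.1 + z.2 + 1, z.1 - z.2)

lemma parityMap_bijective : Function.Bijective parityMap := by
  constructor
  · rintro (⟨p, r⟩ | ⟨p, r⟩) (⟨p', r'⟩ | ⟨p', r'⟩) h <;>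
      simp only [parityMap, Prod.mk.injEq] at h <;> obtain ⟨h1, h2⟩ := h
    · rw [show p = p' by omega, show r = r' by omega]
    · omega
    · omega
    · rw [show p = p' by omega, show r = r' by omega]
  · rintro ⟨n, m⟩
    rcases Int.even_or_odd' (n + m) with ⟨p, hp | hp⟩
    · exact ⟨Sum.inl (p, n - p), by simp only [parityMap, Prod.mk.injEq]; omega⟩
    · exact ⟨Sum.inr (p, n - p - 1), by simp only [parityMap, Prod.mk.injEq]; omega⟩

/-- Hirota's bilinear equation `(D⁴ + α D² + β) τ·τ = 0` for the theta function `τ`. Since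
`n² + m² = ((n+m)² + (n-m)²)/2`, the coefficient of `e^{iNθ}` in the left-hand side depends on `N`
only through a prefactor and the parity of `N`, so two scalar equations suffice. -/
lemma bilinear (hq : |q| ≤ 1 / 2) {α β : ℝ}
    (hev : evenSum q 4 - α * evenSum q 2 + β * evenSum q 0 = 0)
    (hod : oddSum q 4 - α * oddSum q 2 + β * oddSum q 0 = 0) (θ : ℝ) :
    2 * (theta q 4 θ * theta q 0 θ - 4 * theta q 3 θ * theta q 1 θ + 3 * theta q 2 θ ^ 2)
      + 2 * α * (theta q 2 θ * theta q 0 θ - theta q 1 θ ^ 2) + β * theta q 0 θ ^ 2 = 0 := by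
  set f : ℕ → ℤ → ℂ := fun k n => q ^ (n.natAbs ^ 2) • mode k θ n with hf
  have hn : ∀ k, Summable fun n => ‖f k n‖ := fun k => summable_norm_mode hq k θ
  have hprod : ∀ k l, HasSum (fun z : ℤ × ℤ => f k z.1 * f l z.2)
      (theta q k θ * theta q l θ : ℂ) := fun k l => by
    rw [← thetaC_eq, ← thetaC_eq]
    exact (hn k).of_norm.hasSum.mul (hn l).of_norm.hasSum
      (summable_mul_of_summable_norm (hn k) (hn l))
  -- expand the bilinear form in products of modes; `D^k` acts as `(i (n - m))^k`
  have hS := (((hprod 4 0).add (hprod 0 4)).add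
    (((hprod 3 1).add (hprod 1 3)).mul_left (-4 : ℂ))).add ((hprod 2 2).mul_left (6 : ℂ))
  have hS2 := (((hprod 2 0).add (hprod 0 2)).add ((hprod 1 1).mul_left (-2 : ℂ))).mul_left (α : ℂ)
  have hS3 := (hprod 0 0).mul_left (β : ℂ)
  have hT := (hS.add hS2).add hS3
  set F : ℤ × ℤ → ℂ := fun z => (q : ℂ) ^ (z.1.natAbs ^ 2 + z.2.natAbs ^ 2) *
    (((z.1 : ℂ) - z.2) ^ 4 - α * ((z.1 : ℂ) - z.2) ^ 2 + β) *
    Complex.exp (Complex.I * (z.1 + z.2) * θ) with hF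
  have hI4 : Complex.I ^ 4 = 1 := Complex.I_pow_four
  have hI2 : Complex.I ^ 2 = -1 := Complex.I_sq
  have hTF : HasSum F ((2 * (theta q 4 θ * theta q 0 θ - 4 * theta q 3 θ * theta q 1 θ
      + 3 * theta q 2 θ ^ 2) + 2 * α * (theta q 2 θ * theta q 0 θ - theta q 1 θ ^ 2)
      + β * theta q 0 θ ^ 2 : ℝ) : ℂ) := by
    convert hT using 1
    · funext z
      have hexp : Complex.exp (Complex.I * (z.1 + z.2) * θ)
          = Complex.exp (Complex.I * z.1 * θ) * Complex.exp (Complex.I * z.2 * θ) := by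
        rw [← Complex.exp_add]; congr 1; ring
      simp only [hF, hf, mode, Complex.real_smul, hexp, pow_add, Complex.ofReal_pow]
      generalize Complex.exp (Complex.I * z.1 * θ) = e1
      generalize Complex.exp (Complex.I * z.2 * θ) = e2
      simp only [mul_pow, hI4, hI2, pow_succ Complex.I 2, pow_zero, pow_one]
      linear_combination (-(q : ℂ) ^ z.1.natAbs ^ 2 * q ^ z.2.natAbs ^ 2 * e1 * e2) *
        (4 * ((z.1 : ℂ) ^ 3 * z.2 + z.1 * z.2 ^ 3) * (hI2)
          - 2 * α * z.1 * z.2 * hI2)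
    · push_cast; ring
  have hE : HasSum (fun r : ℤ => (q : ℂ) ^ (2 * r.natAbs ^ 2) *
      ((2 * (r : ℂ)) ^ 4 - α * (2 * (r : ℂ)) ^ 2 + β)) 0 := by
    have h := fun k => (summable_norm_nome exp_two_sq (even_bound k) hq).of_norm.hasSum
    have h' := Complex.hasSum_ofReal.2 (((h 4).sub ((h 2).mul_left α)).add ((h 0).mul_left β))
    convert h' using 1
    · funext r; simp only [smul_eq_mul]; push_cast; ring
    · exact congrArg Complex.ofReal hev.symm
  have hO : HasSum (fun r : ℤ => (q : ℂ) ^ (2 * obl r) *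
      ((2 * (r : ℂ) + 1) ^ 4 - α * (2 * (r : ℂ) + 1) ^ 2 + β)) 0 := by
    have h := fun k => (summable_norm_nome exp_obl (odd_bound k) hq).of_norm.hasSum
    have h' := Complex.hasSum_ofReal.2 (((h 4).sub ((h 2).mul_left α)).add ((h 0).mul_left β))
    convert h' using 1
    · funext r; simp only [smul_eq_mul]; push_cast; ring
    · exact congrArg Complex.ofReal hod.symm
  have hsumm : Summable (F ∘ parityMap) :=
    ((Equiv.ofBijective _ parityMap_bijective).summable_iff (f := F)).2 hTF.summable
  have hl : HasSum (F ∘ parityMap ∘ Sum.inl) 0 := by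
    have hP : Summable fun p : ℤ => (q : ℂ) ^ (2 * p.natAbs ^ 2) *
        Complex.exp (Complex.I * (2 * p) * θ) := by
      have := (summable_norm_nome exp_two_sq (fun n => mode_bound 0 (2 * θ) n) hq).of_norm
      refine this.congr fun p => ?_
      simp only [mode, Complex.real_smul, pow_zero, one_mul]
      push_cast
      congr 2; ring
    have hs : F ∘ parityMap ∘ Sum.inl = fun z : ℤ × ℤ => ((q : ℂ) ^ (2 * z.1.natAbs ^ 2) *
        Complex.exp (Complex.I * (2 * z.1) * θ)) * ((q : ℂ) ^ (2 * z.2.natAbs ^ 2) *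
      ((2 * (z.2 : ℂ)) ^ 4 - α * (2 * (z.2 : ℂ)) ^ 2 + β)) := by
      funext ⟨p, r⟩
      have he : (p + r).natAbs ^ 2 + (p - r).natAbs ^ 2
          = 2 * p.natAbs ^ 2 + 2 * r.natAbs ^ 2 := by
        zify; simp only [sq_abs]; ring
      have hpow := congrArg ((q : ℂ) ^ ·) he
      simp only [pow_add (q : ℂ) (2 * _)] at hpow
      simp only [Function.comp, parityMap, hF, hpow]
      push_cast
      ring_nf
    have := hP.hasSum.mul hE (by
      rw [← hs]; exact hsumm.comp_injective Sum.inl_injective)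
    rw [mul_zero] at this
    rwa [hs]
  have hr : HasSum (F ∘ parityMap ∘ Sum.inr) 0 := by
    have hP : Summable fun p : ℤ => (q : ℂ) ^ (2 * obl p) * q *
        Complex.exp (Complex.I * (2 * p + 1) * θ) := by
      have := ((summable_norm_nome exp_obl (fun n => mode_bound 0 (2 * θ) n) hq).of_norm).mul_left
        (q * Complex.exp (Complex.I * θ))
      refine this.congr fun p => ?_
      have : Complex.exp (Complex.I * (2 * p + 1) * θ)
          = Complex.exp (Complex.I * θ) * Complex.exp (Complex.I * p * (2 * θ)) := by
        rw [← Complex.exp_add]; congr 1; ring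
      simp only [mode, Complex.real_smul, pow_zero, one_mul, this]
      push_cast
      ring
    have hs : F ∘ parityMap ∘ Sum.inr = fun z : ℤ × ℤ => ((q : ℂ) ^ (2 * obl z.1) * q *
        Complex.exp (Complex.I * (2 * z.1 + 1) * θ)) * ((q : ℂ) ^ (2 * obl z.2) *
      ((2 * (z.2 : ℂ) + 1) ^ 4 - α * (2 * (z.2 : ℂ) + 1) ^ 2 + β)) := by
      funext ⟨p, r⟩
      have he : (p + r + 1).natAbs ^ 2 + (p - r).natAbs ^ 2
          = 2 * obl p + 1 + 2 * obl r := by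
        zify; simp only [sq_abs, obl_cast]; ring
      have hpow := congrArg ((q : ℂ) ^ ·) he
      simp only [pow_add (q : ℂ) (2 * _), pow_add (q : ℂ) (2 * _ + 1), pow_one] at hpow
      simp only [Function.comp, parityMap, hF, hpow]
      push_cast
      ring_nf
    have := hP.hasSum.mul hO (by
      rw [← hs]; exact hsumm.comp_injective Sum.inr_injective)
    rw [mul_zero] at this
    rwa [hs]
  have h0 : HasSum (F ∘ parityMap) (0 + 0) := HasSum.sum hl hr
  have h0F : HasSum F (0 + 0) :=
    ((Equiv.ofBijective _ parityMap_bijective).hasSum_iff (f := F)).1 h0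
  have := hTF.unique h0F
  rw [add_zero] at this
  exact_mod_cast this

/-! ### The profile and its differential equation -/

/-- The wave profile `A + 12 (log τ)''`, where `τ = theta q 0`. -/
def profile (q A θ : ℝ) : ℝ :=
  A + 12 * (theta q 2 θ / theta q 0 θ - (theta q 1 θ / theta q 0 θ) ^ 2)

lemma profile_periodic (A θ : ℝ) : profile q A (θ + 2 * π) = profile q A θ := by
  simp only [profile, theta_periodic]

lemma profile_neg (A θ : ℝ) : profile q A (-θ) = profile q A θ := by
  simp only [profile, theta_neg]; ring

lemma contDiff_profile (hq : |q| ≤ 1 / 2) (h0 : ∀ θ, theta q 0 θ ≠ 0) (A : ℝ) :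
    ContDiff ℝ (⊤ : ℕ∞) (profile q A) := by
  have h := contDiff_theta hq
  exact contDiff_const.add (contDiff_const.mul
    (((h 2).div (h 0) h0).sub (((h 1).div (h 0) h0).pow 2)))

/-- Divided by `τ²`, the bilinear equation for `τ` becomes the equation `-2 g'' + c g = g²` for the
profile; `hc` and `hA` match the linear and the constant terms. -/
lemma profile_ode (hq : |q| ≤ 1 / 2) (h0 : ∀ θ, theta q 0 θ ≠ 0) {α β A c : ℝ}
    (hev : evenSum q 4 - α * evenSum q 2 + β * evenSum q 0 = 0)
    (hod : oddSum q 4 - α * oddSum q 2 + β * oddSum q 0 = 0)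
    (hc : c = 2 * A - 2 * α) (hA : A ^ 2 - 2 * α * A + 12 * β = 0) :
    ∃ g' g'' : ℝ → ℝ, (∀ θ, HasDerivAt (profile q A) (g' θ) θ) ∧
      (∀ θ, HasDerivAt g' (g'' θ) θ) ∧
      ∀ θ, -(2 * g'' θ) + c * profile q A θ = profile q A θ ^ 2 := by
  set r : ℕ → ℝ → ℝ := fun k θ => theta q k θ / theta q 0 θ with hr
  have hd : ∀ k θ, HasDerivAt (r k) (r (k + 1) θ - r k θ * r 1 θ) θ := fun k θ => by
    refine ((hasDerivAt_theta hq k θ).div (hasDerivAt_theta hq 0 θ) (h0 θ)).congr_deriv ?_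
    have := h0 θ
    simp only [hr]
    field_simp
  refine ⟨fun θ => 12 * (r 3 θ - 3 * r 1 θ * r 2 θ + 2 * r 1 θ ^ 3),
    fun θ => 12 * (r 4 θ - 4 * r 1 θ * r 3 θ - 3 * r 2 θ ^ 2 + 12 * r 1 θ ^ 2 * r 2 θ
      - 6 * r 1 θ ^ 4), fun θ => ?_, fun θ => ?_, fun θ => ?_⟩
  · refine ((((hd 2 θ).sub ((hd 1 θ).pow 2)).const_mul 12).const_add A).congr_deriv ?_
    push_cast
    ring
  · refine ((((hd 3 θ).sub (((hd 1 θ).const_mul 3).mul (hd 2 θ))).add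
      (((hd 1 θ).pow 3).const_mul 2)).const_mul 12).congr_deriv ?_
    push_cast
    ring
  · have hb := bilinear hq hev hod θ
    have hb' : 2 * (r 4 θ - 4 * r 3 θ * r 1 θ + 3 * r 2 θ ^ 2)
        + 2 * α * (r 2 θ - r 1 θ ^ 2) + β = 0 := by
      have := h0 θ
      simp only [hr]
      field_simp
      linear_combination hb
    have hp : profile q A θ = A + 12 * (r 2 θ - r 1 θ ^ 2) := rfl
    rw [hp]
    linear_combination (-12) * hb' + hA + (A + 12 * (r 2 θ - r 1 θ ^ 2)) * hc

/-! ### Asymptotic calculus modulo the fourth order -/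

/-- The nome attached to the amplitude `a`: the coefficient `-24 q / (1 - q²)` of `cos θ` in the
profile is then `a + O(a⁵)`. The negative sign places the crest at `θ = 0`. -/
def nome (a : ℝ) : ℝ := -(a / 24 - (a / 24) ^ 3)

@[fun_prop]
lemma continuous_nome : Continuous nome := by unfold nome; fun_prop

/-- The filter `a → 0⁺`, uniformly in `θ`, on pairs `(a, θ)`. -/
def small : Filter (ℝ × ℝ) := comap Prod.fst (nhdsWithin 0 (Set.Ioi 0))

/-- The variables `(a, cos θ, sin θ)` in which expansions are written. -/
def trig (z : ℝ × ℝ) : ℝ × ℝ × ℝ := (z.1, Real.cos z.2, Real.sin z.2)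

/-- `f` agrees up to `O(a⁴)`, uniformly in `θ`, with the continuous expression `P` in
`(a, cos θ, sin θ)`. -/
structure Approx (f : ℝ × ℝ → ℝ) (P : ℝ × ℝ × ℝ → ℝ) : Prop where
  cont : Continuous P
  err : (fun z => f z - P (trig z)) =O[small] fun z => z.1 ^ 4

lemma small_mem : ∀ᶠ z in small, 0 < z.1 ∧ z.1 < 1 := by
  have : ∀ᶠ a : ℝ in nhdsWithin 0 (Set.Ioi 0), 0 < a ∧ a < 1 :=
    Ioo_mem_nhdsGT (by norm_num)
  exact this.comap _

lemma bounded_trig {P : ℝ × ℝ × ℝ → ℝ} (hP : Continuous P) :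
    (fun z => P (trig z)) =O[small] fun _ => (1 : ℝ) := by
  obtain ⟨K, hK⟩ := ((isCompact_Icc (a := (0 : ℝ)) (b := 1)).prod
    ((isCompact_Icc (a := (-1 : ℝ)) (b := 1)).prod
      (isCompact_Icc (a := (-1 : ℝ)) (b := 1)))).exists_bound_of_continuousOn hP.continuousOn
  refine Asymptotics.IsBigO.of_bound K ?_
  filter_upwards [small_mem] with z hz
  rw [norm_one, mul_one]
  exact hK _ ⟨⟨hz.1.le, hz.2.le⟩, Real.cos_mem_Icc _, Real.sin_mem_Icc _⟩

lemma pow_four_isBigO_one : (fun z : ℝ × ℝ => z.1 ^ 4) =O[small] fun _ => (1 : ℝ) :=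
  bounded_trig (P := fun v => v.1 ^ 4) (by fun_prop)

lemma eventually_small_err {f : ℝ × ℝ → ℝ} (hf : f =O[small] fun z => z.1 ^ 4) :
    ∀ᶠ z in small, |f z| ≤ 1 / 2 := by
  have h4 : Tendsto (fun z : ℝ × ℝ => z.1 ^ 4) small (nhds 0) := by
    have h : Tendsto (fun a : ℝ => a ^ 4) (nhdsWithin 0 (Set.Ioi 0)) (nhds 0) := by
      have := (continuous_pow 4 : Continuous fun a : ℝ => a ^ 4).tendsto 0
      simpa using this.mono_left nhdsWithin_le_nhds
    exact h.comp tendsto_comap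
  have := hf.trans_tendsto h4
  have h2 := this.abs
  rw [abs_zero] at h2
  exact h2.eventually_le_const (by norm_num)

namespace Approx

variable {f g : ℝ × ℝ → ℝ} {P S : ℝ × ℝ × ℝ → ℝ}

lemma const (k : ℝ) : Approx (fun _ => k) (fun _ => k) :=
  ⟨continuous_const, by simpa using Asymptotics.isBigO_zero _ _⟩

lemma bounded (hf : Approx f P) : f =O[small] fun _ => (1 : ℝ) := by
  simpa using (hf.err.trans pow_four_isBigO_one).add (bounded_trig hf.cont)

lemma add (hf : Approx f P) (hg : Approx g S) :
    Approx (fun z => f z + g z) (fun v => P v + S v) := by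
  refine ⟨hf.cont.add hg.cont, (hf.err.add hg.err).congr_left fun z => ?_⟩
  ring

lemma mul (hf : Approx f P) (hg : Approx g S) :
    Approx (fun z => f z * g z) (fun v => P v * S v) := by
  refine ⟨hf.cont.mul hg.cont, ?_⟩
  have h1 := hf.err.mul hg.bounded
  have h2 := (bounded_trig hf.cont).mul hg.err
  simp only [mul_one, one_mul] at h1 h2
  exact (h1.add h2).congr_left fun z => by ring

lemma sub (hf : Approx f P) (hg : Approx g S) :
    Approx (fun z => f z - g z) (fun v => P v - S v) := by
  refine ⟨hf.cont.sub hg.cont, (hf.err.sub hg.err).congr_left fun z => ?_⟩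
  ring

/-- Terms with a factor `a⁴` may be dropped, and `cos² + sin² = 1` may be used. -/
lemma reduce (hf : Approx f P) (hS : Continuous S) (R : ℝ × ℝ × ℝ → ℝ) (hR : Continuous R)
    (h : ∀ v : ℝ × ℝ × ℝ, v.2.1 ^ 2 + v.2.2 ^ 2 = 1 → P v = S v + v.1 ^ 4 * R v) :
    Approx f S := by
  refine ⟨hS, ?_⟩
  have h1 := (Asymptotics.isBigO_refl (fun z : ℝ × ℝ => z.1 ^ 4) small).mul (bounded_trig hR)
  simp only [mul_one] at h1
  refine (hf.err.add h1).congr_left fun z => ?_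
  have := h (trig z) (Real.cos_sq_add_sin_sq z.2)
  rw [this]
  simp only [trig]
  ring

/-- `reduce` with the nome in place of `a`. -/
lemma reduce' (hf : Approx f P) (hS : Continuous S) (R : ℝ × ℝ × ℝ → ℝ) (hR : Continuous R)
    (h : ∀ v : ℝ × ℝ × ℝ, v.2.1 ^ 2 + v.2.2 ^ 2 = 1 → P v = S v + nome v.1 ^ 4 * R v) :
    Approx f S := by
  refine hf.reduce hS (fun v => (1 / 24 - v.1 ^ 2 / 24 ^ 3) ^ 4 * R v) (by fun_prop) fun v hv => ?_
  rw [h v hv, nome]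
  ring

/-- Inversion: `S` is an inverse of `P` modulo `q⁴`. -/
lemma inv (hf : Approx f P) (hS : Continuous S) (R : ℝ × ℝ × ℝ → ℝ) (hR : Continuous R)
    (h : ∀ v : ℝ × ℝ × ℝ, v.2.1 ^ 2 + v.2.2 ^ 2 = 1 → P v * S v = 1 + nome v.1 ^ 4 * R v) :
    Approx (fun z => (f z)⁻¹) S ∧ ∀ᶠ z in small, f z ≠ 0 := by
  have hSS : Approx (fun z => S (trig z)) S := ⟨hS, by simpa using Asymptotics.isBigO_zero _ _⟩
  have h1 := ((hf.mul hSS).reduce' (S := fun _ => 1) continuous_const R hR h).err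
  have hev : ∀ᶠ z in small, f z ≠ 0 ∧ 1 / 2 ≤ |f z * S (trig z)| := by
    filter_upwards [eventually_small_err h1] with z hz
    have h2 : 1 / 2 ≤ |f z * S (trig z)| := by
      have := abs_sub_abs_le_abs_sub 1 (f z * S (trig z))
      rw [abs_sub_comm, abs_one] at this
      linarith
    refine ⟨fun h0 => ?_, h2⟩
    rw [h0] at h2
    norm_num at h2
  refine ⟨⟨hS, ?_⟩, hev.mono fun z hz => hz.1⟩
  have h3 := h1.mul (bounded_trig hS)
  simp only [mul_one] at h3
  refine Asymptotics.IsBigO.trans (Asymptotics.IsBigO.of_bound 2 ?_) h3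
  filter_upwards [hev] with z ⟨h0, h2⟩
  have hid : (f z)⁻¹ - S (trig z) = -((f z * S (trig z) - 1) * (f z)⁻¹) := by
    field_simp; ring
  rw [hid, norm_neg, norm_mul, norm_mul, norm_inv, Real.norm_eq_abs, Real.norm_eq_abs,
    Real.norm_eq_abs]
  rw [abs_mul] at h2
  have hfp : 0 < |f z| := abs_pos.2 h0
  have h4 : |f z|⁻¹ ≤ 2 * |S (trig z)| := by
    rw [inv_le_iff_one_le_mul₀ hfp]; linarith
  nlinarith [abs_nonneg (f z * S (trig z) - 1)]

/-- Square roots: `S ≥ 1` is a square root of `P` modulo `q⁴`. -/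
lemma sqrt (hf : Approx f P) (hS : Continuous S) (hS1 : ∀ v, 1 ≤ S v) (R : ℝ × ℝ × ℝ → ℝ)
    (hR : Continuous R)
    (h : ∀ v : ℝ × ℝ × ℝ, v.2.1 ^ 2 + v.2.2 ^ 2 = 1 → P v = S v ^ 2 + nome v.1 ^ 4 * R v) :
    Approx (fun z => √(f z)) S ∧ ∀ᶠ z in small, 0 ≤ f z := by
  have h1 := (hf.reduce' (S := fun v => S v ^ 2) (hS.pow 2) R hR h).err
  refine ⟨⟨hS, Asymptotics.IsBigO.trans (Asymptotics.isBigO_of_le _ fun z => ?_) h1⟩, ?_⟩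
  · have hs := hS1 (trig z)
    rw [Real.norm_eq_abs, Real.norm_eq_abs]
    rcases le_or_gt 0 (f z) with h0 | h0
    · have hid : f z - S (trig z) ^ 2 = (√(f z) - S (trig z)) * (√(f z) + S (trig z)) := by
        nlinarith [Real.sq_sqrt h0]
      rw [hid, abs_mul]
      refine le_mul_of_one_le_right (abs_nonneg _) ?_
      exact le_trans (by linarith [Real.sqrt_nonneg (f z)]) (le_abs_self _)
    · rw [Real.sqrt_eq_zero_of_nonpos h0.le, zero_sub, abs_neg, abs_of_nonneg (by linarith),
        abs_of_nonpos (by nlinarith)]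
      nlinarith
  · filter_upwards [eventually_small_err h1] with z hz
    have := (abs_le.1 hz).1
    nlinarith [hS1 (trig z)]

lemma of_bound {f : ℝ → ℝ → ℝ} (hP : Continuous P)
    (h : ∃ M : ℝ, ∀ q θ : ℝ, |q| ≤ 1 / 2 → ∀ v : ℝ × ℝ × ℝ, q = nome v.1 → v.2.1 = Real.cos θ →
      v.2.2 = Real.sin θ → |f q θ - P v| ≤ M * q ^ 4) :
    Approx (fun z => f (nome z.1) z.2) P := by
  obtain ⟨M, hM⟩ := h
  refine ⟨hP, Asymptotics.IsBigO.of_bound |M| ?_⟩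
  filter_upwards [small_mem] with z ⟨h0, h1⟩
  have hn : |nome z.1| ≤ z.1 / 2 := by
    rw [nome, abs_neg, abs_le]
    constructor <;> nlinarith [pow_pos h0 3, pow_le_one₀ h0.le h1.le (n := 2)]
  have h2 := hM (nome z.1) z.2 (by linarith) (trig z) rfl rfl rfl
  have h3 : nome z.1 ^ 4 ≤ z.1 ^ 4 := by
    rw [← (by decide : Even 4).pow_abs]
    exact pow_le_pow_left₀ (abs_nonneg _) (by linarith) 4
  rw [Real.norm_eq_abs, Real.norm_of_nonneg (by positivity)]
  calc _ ≤ M * nome z.1 ^ 4 := h2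
    _ ≤ |M| * nome z.1 ^ 4 := by gcongr; exact le_abs_self M
    _ ≤ _ := by gcongr

end Approx

/-! ### Expansions of the theta function, the profile and the frequency -/

lemma theta_tail (k : ℕ) : ∃ M : ℝ, ∀ q θ : ℝ, |q| ≤ 1 / 2 →
    |theta q k θ - ((mode k θ 0).re + q * ((mode k θ 1).re + (mode k θ (-1)).re))|
      ≤ M * q ^ 4 := by
  obtain ⟨M, hM⟩ := tail_bound exp_sq {0, 1, -1} (fun n hn => by
    simp only [Finset.mem_insert, Finset.mem_singleton, not_or] at hn
    have : 2 ≤ n.natAbs := by omega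
    nlinarith) k
  refine ⟨M, fun q θ hq => ?_⟩
  refine le_trans (le_of_eq_of_le ?_ (Complex.abs_re_le_norm _)) (hM (mode k θ) (mode_bound k θ) q hq)
  rw [Complex.sub_re]
  congr 1
  rw [Finset.sum_insert (by decide), Finset.sum_insert (by decide), Finset.sum_singleton]
  simp [theta, thetaC]
  ring

lemma theta0_approx : Approx (fun z => theta (nome z.1) 0 z.2)
    (fun v => 1 + 2 * nome v.1 * v.2.1) := by
  refine Approx.of_bound (f := fun q θ => theta q 0 θ) (by fun_prop) ?_
  obtain ⟨M, hM⟩ := theta_tail 0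
  refine ⟨M, fun q θ hq v h1 h2 h3 => (le_of_eq ?_).trans (hM q θ hq)⟩
  rw [← h1, h2]
  congr 2
  simp [mode, Complex.exp_re]
  ring

lemma theta1_approx : Approx (fun z => theta (nome z.1) 1 z.2)
    (fun v => -2 * nome v.1 * v.2.2) := by
  refine Approx.of_bound (f := fun q θ => theta q 1 θ) (by fun_prop) ?_
  obtain ⟨M, hM⟩ := theta_tail 1
  refine ⟨M, fun q θ hq v h1 h2 h3 => (le_of_eq ?_).trans (hM q θ hq)⟩
  rw [← h1, h3]
  congr 2
  simp [mode, Complex.exp_re, Complex.exp_im]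
  ring

lemma theta2_approx : Approx (fun z => theta (nome z.1) 2 z.2)
    (fun v => -2 * nome v.1 * v.2.1) := by
  refine Approx.of_bound (f := fun q θ => theta q 2 θ) (by fun_prop) ?_
  obtain ⟨M, hM⟩ := theta_tail 2
  refine ⟨M, fun q θ hq v h1 h2 h3 => (le_of_eq ?_).trans (hM q θ hq)⟩
  rw [← h1, h2]
  congr 2
  simp [mode, Complex.exp_re]
  ring

lemma even_approx (k : ℕ) : Approx (fun z => evenSum (nome z.1) k)
    (fun v => 0 ^ k + nome v.1 ^ 2 * (2 ^ k + (-2) ^ k)) := by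
  refine Approx.of_bound (f := fun q _ => evenSum q k) (by fun_prop) ?_
  obtain ⟨M, hM⟩ := tail_bound exp_two_sq {0, 1, -1} (fun n hn => by
    simp only [Finset.mem_insert, Finset.mem_singleton, not_or] at hn
    have : 2 ≤ n.natAbs := by omega
    nlinarith) k
  refine ⟨M, fun q θ hq v h1 h2 h3 => ?_⟩
  refine (le_of_eq ?_).trans (hM (fun r : ℤ => (2 * (r : ℝ)) ^ k) (even_bound k) q hq)
  rw [Finset.sum_insert (by decide), Finset.sum_insert (by decide), Finset.sum_singleton, ← h1,
    Real.norm_eq_abs]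
  congr 2
  simp
  ring

lemma odd_approx (k : ℕ) : Approx (fun z => oddSum (nome z.1) k)
    (fun _ => 1 + (-1) ^ k) := by
  refine Approx.of_bound (f := fun q _ => oddSum q k) (by fun_prop) ?_
  obtain ⟨M, hM⟩ := tail_bound exp_obl {0, -1} (fun n hn => by
    simp only [Finset.mem_insert, Finset.mem_singleton, not_or] at hn
    have h := obl_cast n
    zify
    rw [h]
    rcases lt_or_gt_of_ne hn.1 with h' | h'
    · have : n ≤ -2 := by omega
      nlinarith
    · nlinarith) k
  refine ⟨M, fun q θ hq v h1 h2 h3 => ?_⟩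
  refine (le_of_eq ?_).trans (hM (fun r : ℤ => (2 * (r : ℝ) + 1) ^ k) (odd_bound k) q hq)
  rw [Finset.sum_insert (by decide), Finset.sum_singleton, Real.norm_eq_abs]
  congr 2
  simp [obl]
  norm_num

/-- Determinant of the linear system for `(α, β)`. -/
def det (q : ℝ) : ℝ := evenSum q 0 * oddSum q 2 - evenSum q 2 * oddSum q 0

/-- Coefficient of `D²` in the bilinear equation. -/
def alpha (q : ℝ) : ℝ := (evenSum q 0 * oddSum q 4 - evenSum q 4 * oddSum q 0) * (det q)⁻¹

/-- Constant coefficient in the bilinear equation. -/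
def beta (q : ℝ) : ℝ := (alpha q * evenSum q 2 - evenSum q 4) * (evenSum q 0)⁻¹

/-- Half of the frequency `c`: the profile solves the wave equation for `A = α ± rad` and
`c = ± 2 rad`. -/
def rad (q : ℝ) : ℝ := √(alpha q ^ 2 - 12 * beta q)

lemma det_approx : Approx (fun z => (det (nome z.1))⁻¹) (fun v => 1 / 2 + 3 * nome v.1 ^ 2) ∧
    ∀ᶠ z in small, det (nome z.1) ≠ 0 := by
  refine Approx.inv (((even_approx 0).mul (odd_approx 2)).sub ((even_approx 2).mul (odd_approx 0)))
    (by fun_prop) (fun _ => -36) (by fun_prop) fun v _ => ?_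
  ring

lemma even_inv_approx : Approx (fun z => (evenSum (nome z.1) 0)⁻¹) (fun v => 1 - 2 * nome v.1 ^ 2) ∧
    ∀ᶠ z in small, evenSum (nome z.1) 0 ≠ 0 := by
  refine Approx.inv (even_approx 0) (by fun_prop) (fun _ => -4) (by fun_prop) fun v _ => ?_
  ring

lemma alpha_approx : Approx (fun z => alpha (nome z.1)) (fun v => 1 - 24 * nome v.1 ^ 2) := by
  refine ((((even_approx 0).mul (odd_approx 4)).sub ((even_approx 4).mul (odd_approx 0))).mul
    det_approx.1).reduce' (by fun_prop) (fun _ => -180) (by fun_prop) fun v _ => ?_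
  ring

lemma beta_approx : Approx (fun z => beta (nome z.1)) (fun v => -24 * nome v.1 ^ 2) := by
  refine (((alpha_approx.mul (even_approx 2)).sub (even_approx 4)).mul
    even_inv_approx.1).reduce' (by fun_prop) (fun v => -144 + 384 * nome v.1 ^ 2)
    (by fun_prop) fun v _ => ?_
  ring

lemma rad_approx : Approx (fun z => rad (nome z.1)) (fun v => 1 + 120 * nome v.1 ^ 2) ∧
    ∀ᶠ z in small, 0 ≤ alpha (nome z.1) ^ 2 - 12 * beta (nome z.1) := by
  have h := (alpha_approx.mul alpha_approx).sub ((Approx.const 12).mul beta_approx)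
  simp only [← sq] at h
  refine Approx.sqrt h (by fun_prop) (fun v => by nlinarith [sq_nonneg (nome v.1)])
    (fun _ => 576 - 14400) (by fun_prop) fun v _ => ?_
  ring

lemma theta0_inv_approx : Approx (fun z => (theta (nome z.1) 0 z.2)⁻¹)
    (fun v => 1 - 2 * nome v.1 * v.2.1 + (2 * nome v.1 * v.2.1) ^ 2 - (2 * nome v.1 * v.2.1) ^ 3) ∧
    ∀ᶠ z in small, theta (nome z.1) 0 z.2 ≠ 0 := by
  refine Approx.inv theta0_approx (by fun_prop) (fun v => -(2 * v.2.1) ^ 4)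
    (by fun_prop) fun v _ => ?_
  ring

lemma freq_approx : Approx (fun z => 2 * rad (nome z.1)) (fun v => 2 + 5 / 12 * v.1 ^ 2) := by
  refine ((Approx.const 2).mul rad_approx.1).reduce (by fun_prop)
    (fun v => -5 / 3456 + 5 / 3981312 * v.1 ^ 2) (by fun_prop) fun v _ => ?_
  simp only [nome]
  ring

lemma profile_approx : Approx
    (fun z => profile (nome z.1) (alpha (nome z.1) + rad (nome z.1)) z.2)
    (fun v => 2 + v.1 * v.2.1 + v.1 ^ 2 / 6 * (1 + 1 / 2 * (2 * v.2.1 ^ 2 - 1))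
      + v.1 ^ 3 / 192 * (4 * v.2.1 ^ 3 - 3 * v.2.1)) := by
  have h1 := theta1_approx.mul theta0_inv_approx.1
  have h := (alpha_approx.add rad_approx.1).add ((Approx.const 12).mul
    ((theta2_approx.mul theta0_inv_approx.1).sub (h1.mul h1)))
  simp only [← sq, ← div_eq_mul_inv] at h
  -- first expand to third order in the nome `q`, then substitute `q = nome a`
  have h' := h.reduce' (S := fun v => 2 + 96 * nome v.1 ^ 2 + 12 * (-2 * nome v.1 * v.2.1
      + 4 * nome v.1 ^ 2 * (2 * v.2.1 ^ 2 - 1) + nome v.1 ^ 3 * (16 * v.2.1 - 24 * v.2.1 ^ 3)))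
    (by fun_prop)
    (fun v => 192 * (v.2.1 ^ 4 + (v.2.1 ^ 4 - v.2.1 ^ 2) * (3 - 4 * (2 * nome v.1 * v.2.1)
      + 3 * (2 * nome v.1 * v.2.1) ^ 2 - 2 * (2 * nome v.1 * v.2.1) ^ 3
      + (2 * nome v.1 * v.2.1) ^ 4))) (by fun_prop) fun v hv => by
    linear_combination (-48 * nome v.1 ^ 2 * (1 - 2 * nome v.1 * v.2.1
      + (2 * nome v.1 * v.2.1) ^ 2 - (2 * nome v.1 * v.2.1) ^ 3) ^ 2) * hv
  refine h'.reduce (by fun_prop) (fun v => 1 / 24 ^ 4 * (96 * (-2 + (v.1 / 24) ^ 2)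
    + 48 * (2 * v.2.1 ^ 2 - 1) * (-2 + (v.1 / 24) ^ 2) + 12 * (16 * v.2.1 - 24 * v.2.1 ^ 3)
      * (3 * (v.1 / 24) - 3 * (v.1 / 24) ^ 3 + (v.1 / 24) ^ 5))) (by fun_prop) fun v _ => ?_
  simp only [nome]
  ring

/-! ### Waves depending on one diagonal variable -/

lemma nome_bound : ∀ᶠ z in small, |nome z.1| ≤ 1 / 2 := by
  filter_upwards [small_mem] with z ⟨h0, h1⟩
  rw [nome, abs_neg, abs_le]
  constructor <;> nlinarith [pow_pos h0 3, pow_le_one₀ h0.le h1.le (n := 2)]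

/-- The one-dimensional problem: even periodic solutions of `-2 g'' + c g = g²` with their
expansions. -/
lemma profile_exists : ∃ a₀ > (0 : ℝ), ∃ C > (0 : ℝ), ∀ a ∈ Set.Ioo (0 : ℝ) a₀,
    ∃ (c : ℝ) (g g' g'' : ℝ → ℝ), ContDiff ℝ (⊤ : ℕ∞) g ∧ (∀ θ, g (θ + 2 * π) = g θ) ∧
      (∀ θ, g (-θ) = g θ) ∧ (∀ θ, HasDerivAt g (g' θ) θ) ∧ (∀ θ, HasDerivAt g' (g'' θ) θ) ∧
      (∀ θ, -(2 * g'' θ) + c * g θ = g θ ^ 2) ∧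
      (∀ θ, |g θ - (2 + a * Real.cos θ + (a ^ 2 / 6) * (1 + (1 / 2) * Real.cos (2 * θ))
        + (a ^ 3 / 192) * Real.cos (3 * θ))| ≤ C * a ^ 4) ∧
      |c - (2 + (5 / 12) * a ^ 2)| ≤ C * a ^ 4 := by
  obtain ⟨C₁, hC₁⟩ := profile_approx.err.bound
  obtain ⟨C₂, hC₂⟩ := freq_approx.err.bound
  have hall := ((((((hC₁.and hC₂).and nome_bound).and theta0_inv_approx.2).and
    det_approx.2).and even_inv_approx.2).and rad_approx.2)
  rw [small, eventually_comap] at hall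
  obtain ⟨a₀, ha₀, hsub⟩ := mem_nhdsGT_iff_exists_Ioo_subset.1 hall
  refine ⟨a₀, ha₀, max (max C₁ C₂) 1, by positivity, fun a ha => ?_⟩
  have hz := fun θ : ℝ => hsub ha (a, θ) rfl
  obtain ⟨⟨⟨⟨⟨⟨-, h2⟩, hq⟩, -⟩, hdet⟩, hev⟩, hrad⟩ := hz 0
  have h1 := fun θ => (hz θ).1.1.1.1.1.1
  have h0 : ∀ θ, theta (nome a) 0 θ ≠ 0 := fun θ => (hz θ).1.1.1.2
  simp only [trig, Real.norm_eq_abs] at h1 h2 hq hdet hev hrad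
  have ha4 : |a ^ 4| = a ^ 4 := abs_of_nonneg (by positivity)
  rw [ha4] at h2
  have hE : evenSum (nome a) 4 - alpha (nome a) * evenSum (nome a) 2
      + beta (nome a) * evenSum (nome a) 0 = 0 := by
    rw [beta, mul_assoc, inv_mul_cancel₀ hev]; ring
  have hO : oddSum (nome a) 4 - alpha (nome a) * oddSum (nome a) 2
      + beta (nome a) * oddSum (nome a) 0 = 0 := by
    have hα : alpha (nome a) * det (nome a) = evenSum (nome a) 0 * oddSum (nome a) 4
        - evenSum (nome a) 4 * oddSum (nome a) 0 := by
      rw [alpha, mul_assoc, inv_mul_cancel₀ hdet, mul_one]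
    rw [det] at hα
    refine (mul_eq_zero.1 (?_ : evenSum (nome a) 0 * _ = 0)).resolve_left hev
    linear_combination oddSum (nome a) 0 * hE - hα
  have hs : rad (nome a) ^ 2 = alpha (nome a) ^ 2 - 12 * beta (nome a) := Real.sq_sqrt hrad
  obtain ⟨g', g'', hg', hg'', hode⟩ := profile_ode hq h0 (A := alpha (nome a) + rad (nome a))
    (c := 2 * rad (nome a)) hE hO (by ring) (by linear_combination hs)
  refine ⟨2 * rad (nome a), _, g', g'', contDiff_profile hq h0 _, profile_periodic _,
    profile_neg _, hg', hg'', hode, fun θ => ?_, ?_⟩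
  · have h := h1 θ
    rw [ha4] at h
    rw [Real.cos_two_mul, Real.cos_three_mul]
    refine h.trans ?_
    gcongr
    exact (le_max_left _ _).trans (le_max_left _ _)
  · refine h2.trans ?_
    gcongr
    exact (le_max_right _ _).trans (le_max_left _ _)

lemma lap_add {g g' g'' : ℝ → ℝ} (h1 : ∀ θ, HasDerivAt g (g' θ) θ)
    (h2 : ∀ θ, HasDerivAt g' (g'' θ) θ) (x y : ℝ) :
    lap (fun x y => g (x + y)) x y = 2 * g'' (x + y) := by
  have e1 : ∀ t b, deriv (fun s => g (s + b)) t = g' (t + b) := fun t b =>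
    ((h1 (t + b)).comp_add_const t b).deriv
  have e2 : ∀ t b, deriv (fun s => g (b + s)) t = g' (b + t) := fun t b =>
    ((h1 (b + t)).comp_const_add b t).deriv
  have e3 := ((h2 (x + y)).comp_add_const x y).deriv
  have e4 := ((h2 (x + y)).comp_const_add x y).deriv
  simp only [lap, e1, e2, e3, e4]
  ring

lemma lap_sub {g g' g'' : ℝ → ℝ} (h1 : ∀ θ, HasDerivAt g (g' θ) θ)
    (h2 : ∀ θ, HasDerivAt g' (g'' θ) θ) (x y : ℝ) :
    lap (fun x y => g (x - y)) x y = 2 * g'' (x - y) := by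
  have e1 : ∀ t b, deriv (fun s => g (s - b)) t = g' (t - b) := fun t b =>
    ((h1 (t - b)).comp_sub_const t b).deriv
  have e2 : ∀ t b, deriv (fun s => g (b - s)) t = -g' (b - t) := fun t b =>
    ((h1 (b - t)).comp_const_sub b t).deriv
  have e3 := ((h2 (x - y)).comp_sub_const x y).deriv
  have e4 := ((h2 (x - y)).comp_const_sub x y).neg.deriv
  simp only [lap, e1, e2, e3]
  rw [show (fun t => -g' (x - t)) = -(fun t => g' (x - t)) from rfl, e4]
  ring

/-- Existence of two small-amplitude branches of even doubly periodic waves for p = 1,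
with expansions in cos(x±y) and common frequency c = 2 + (5/12)a² + O(a⁴). -/
theorem small_amplitude_even_waves_p_one :
    ∃ a₀ > (0:ℝ), ∃ C > (0:ℝ), ∀ a ∈ Set.Ioo (0:ℝ) a₀,
      ∃ (c : ℝ) (φp φm : ℝ → ℝ → ℝ),
        Smooth2 φp ∧ DblPeriodic φp ∧ EvenFun2 φp ∧
        Smooth2 φm ∧ DblPeriodic φm ∧ EvenFun2 φm ∧
        (∀ x y : ℝ, -(lap φp x y) + c * φp x y = (φp x y)^2) ∧
        (∀ x y : ℝ, -(lap φm x y) + c * φm x y = (φm x y)^2) ∧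
        (∀ x y : ℝ,
          |φp x y - (2 + a * Real.cos (x + y)
            + (a^2/6) * (1 + (1/2) * Real.cos (2*x + 2*y))
            + (a^3/192) * Real.cos (3*x + 3*y))| ≤ C * a^4) ∧
        (∀ x y : ℝ,
          |φm x y - (2 + a * Real.cos (x - y)
            + (a^2/6) * (1 + (1/2) * Real.cos (2*x - 2*y))
            + (a^3/192) * Real.cos (3*x - 3*y))| ≤ C * a^4) ∧
        |c - (2 + (5/12) * a^2)| ≤ C * a^4 := by
  obtain ⟨a₀, ha₀, C, hC, H⟩ := profile_exists
  refine ⟨a₀, ha₀, C, hC, fun a ha => ?_⟩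
  obtain ⟨c, g, g', g'', hg, hper, heven, h1, h2, hode, happ, hc⟩ := H a ha
  refine ⟨c, fun x y => g (x + y), fun x y => g (x - y), ?_, ?_, ?_, ?_, ?_, ?_, ?_, ?_, ?_, ?_, hc⟩
  · exact hg.comp (contDiff_fst.add contDiff_snd)
  · intro x y
    refine ⟨?_, ?_⟩
    · change g (x + 2 * π + y) = g (x + y)
      rw [← hper (x + y)]; ring_nf
    · change g (x + (y + 2 * π)) = g (x + y)
      rw [← hper (x + y)]; ring_nf
  · intro x y
    change g (-x + -y) = g (x + y)
    rw [← heven (x + y)]; ring_nf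
  · exact hg.comp (contDiff_fst.sub contDiff_snd)
  · intro x y
    refine ⟨?_, ?_⟩
    · change g (x + 2 * π - y) = g (x - y)
      rw [← hper (x - y)]; ring_nf
    · change g (x - (y + 2 * π)) = g (x - y)
      rw [← hper (x - (y + 2 * π))]; ring_nf
  · intro x y
    change g (-x - -y) = g (x - y)
    rw [← heven (x - y)]; ring_nf
  · intro x y
    rw [lap_add h1 h2]
    exact hode (x + y)
  · intro x y
    rw [lap_sub h1 h2]
    exact hode (x - y)
  · intro x y
    have := happ (x + y)
    rwa [mul_add 2 x y, mul_add 3 x y] at this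
  · intro x y
    have := happ (x - y)
    rwa [mul_sub 2 x y, mul_sub 3 x y] at this
end
end

section
/- Let u : ℝ² → ℝ be a smooth, doubly 2π-periodic, symmetric function satisfying Δu + 2u = 0 on ℝ². Then there exists a real number α such that u(x,y) = α cos(x)cos(y) for all (x,y) ∈ ℝ²; that is, the kernel of −Δ − 2 in the class of symmetric doubly 2π-periodic functions is one dimensional, spanned by cos(x)cos(y). -/
/-!
The proof is by Fourier expansion on the torus. Since `u` is even in each variable, only the
cosine coefficients `cosCoeff u m n = ∬ u(x,y) cos(mx) cos(ny)` matter. Integrating by parts twice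
in each variable (`integral_second_deriv_mul_cos`), the equation `Δu + 2u = 0` gives
`(m² + n² - 2) * cosCoeff u m n = 0`, so every coefficient with `(m, n) ≠ (1, 1)` vanishes
(`cosCoeff_eq_zero_of_pde`). Choosing `α` so that `w = u - α cos x cos y`, which solves the same
equation, also has vanishing `(1, 1)` coefficient, all coefficients of `w` vanish, and `w = 0` by
completeness of the cosines, applied in one variable at a time (`eq_zero_of_cosCoeff`).
-/

noncomputable section
open Real

/-- Completeness of the cosines among continuous even `2π`-periodic functions. -/
theorem eq_zero_of_cos_coeff {f : ℝ → ℝ} (hf : Continuous f)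
    (hp : ∀ x, f (x + 2 * π) = f x) (he : ∀ x, f (-x) = f x)
    (h0 : ∀ n : ℕ, ∫ x in (-π)..π, f x * cos (n * x) = 0) (x : ℝ) : f x = 0 := by
  have : Fact (0 < 2 * π) := ⟨by positivity⟩
  have hpc : Function.Periodic (fun x => (f x : ℂ)) (2 * π) := fun x => by simp [hp]
  let F : C(AddCircle (2 * π), ℂ) :=
    ⟨hpc.lift, continuous_coinduced_dom.mpr (by
      change Continuous fun x => (f x : ℂ)
      fun_prop)⟩
  have hF : ∀ x : ℝ, F (x : AddCircle (2 * π)) = (f x : ℂ) := fun x => hpc.lift_coe x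
  have hcos : ∀ n : ℤ, ∫ x in (-π)..π, f x * cos (n * x) = 0 := by
    intro n
    obtain ⟨k, rfl | rfl⟩ := n.eq_nat_or_neg
    · simpa using h0 k
    · simpa using h0 k
  have hsin : ∀ n : ℤ, ∫ x in (-π)..π, f x * sin (n * x) = 0 := by
    intro n
    have h := intervalIntegral.integral_comp_neg (a := -π) (b := π)
      (fun x => f x * sin (n * x))
    simp only [he, mul_neg, sin_neg, neg_neg, intervalIntegral.integral_neg] at h
    linarith
  have hc : ∀ n, fourierCoeff F n = 0 := by
    intro n
    rw [fourierCoeff_eq_intervalIntegral F n (-π), show -π + 2 * π = π by ring]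
    have key : ∀ x : ℝ, @fourier (2 * π) (-n) x • F (x : AddCircle (2 * π)) =
        ((f x * cos (n * x) : ℝ) : ℂ) - ((f x * sin (n * x) : ℝ) : ℂ) * Complex.I := by
      intro x
      rw [hF, fourier_coe_apply]
      have : (2 * π * Complex.I * ((-n : ℤ) : ℂ) * x / ((2 * π : ℝ) : ℂ)) =
          ((-(n * x) : ℝ) : ℂ) * Complex.I := by
        have : (π : ℂ) ≠ 0 := by exact_mod_cast pi_ne_zero
        push_cast
        field_simp
      rw [this, Complex.exp_mul_I, ← Complex.ofReal_cos, ← Complex.ofReal_sin, cos_neg, sin_neg,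
        smul_eq_mul]
      push_cast
      ring
    simp_rw [key]
    rw [intervalIntegral.integral_sub, intervalIntegral.integral_mul_const,
      intervalIntegral.integral_ofReal, intervalIntegral.integral_ofReal, hcos, hsin]
    · simp
    · exact Continuous.intervalIntegrable (by fun_prop) _ _
    · exact Continuous.intervalIntegrable (by fun_prop) _ _
  have hs : Summable (fourierCoeff F) := by
    rw [show fourierCoeff F = fun _ => 0 from funext hc]; exact summable_zero
  have h := hasSum_fourier_series_of_summable hs
  simp only [hc, zero_smul] at h
  have hF0 : F = 0 := h.unique hasSum_zero
  have := hF x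
  rw [hF0] at this
  simpa using this.symm

/-- Two integrations by parts on the circle; the boundary terms cancel by periodicity. -/
theorem integral_second_deriv_mul_cos {g g' g'' : ℝ → ℝ} (h1 : ∀ x, HasDerivAt g (g' x) x)
    (h2 : ∀ x, HasDerivAt g' (g'' x) x) (hc : Continuous g'')
    (hp : ∀ x, g (x + 2 * π) = g x) (n : ℕ) :
    ∫ x in (-π)..π, g'' x * cos (n * x) = -(n : ℝ) ^ 2 * ∫ x in (-π)..π, g x * cos (n * x) := by
  have hgc : Continuous g := continuous_iff_continuousAt.2 fun x => (h1 x).continuousAt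
  have hp' : ∀ x, g' (x + 2 * π) = g' x := by
    intro x
    have h := (h1 (x + 2 * π)).comp_add_const x (2 * π)
    simp only [hp] at h
    exact h.unique (h1 x)
  have hd : ∀ x : ℝ, HasDerivAt (fun x => g' x * cos (n * x) + n * (g x * sin (n * x)))
      (g'' x * cos (n * x) + (n : ℝ) ^ 2 * (g x * cos (n * x))) x := by
    intro x
    have hl : HasDerivAt (fun x : ℝ => (n : ℝ) * x) n x := by
      simpa using (hasDerivAt_id x).const_mul (n : ℝ)
    refine (((h2 x).mul hl.cos).add (((h1 x).mul hl.sin).const_mul (n : ℝ))).congr_deriv ?_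
    ring
  have hI := intervalIntegral.integral_eq_sub_of_hasDerivAt (a := -π) (b := π)
    (fun x _ => hd x) (Continuous.intervalIntegrable (by fun_prop) _ _)
  rw [intervalIntegral.integral_add (Continuous.intervalIntegrable (by fun_prop) _ _)
    (Continuous.intervalIntegrable (by fun_prop) _ _),
    intervalIntegral.integral_const_mul] at hI
  have e1 := hp (-π)
  have e2 := hp' (-π)
  rw [show -π + 2 * π = π by ring] at e1 e2
  simp only [e1, e2, mul_neg, cos_neg, sin_neg, sin_nat_mul_pi] at hI
  linarith


theorem integral_swap_of_continuous {f : ℝ → ℝ → ℝ} (hf : Continuous fun p : ℝ × ℝ => f p.1 p.2) :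
    ∫ x in (-π)..π, ∫ y in (-π)..π, f x y = ∫ y in (-π)..π, ∫ x in (-π)..π, f x y := by
  apply MeasureTheory.intervalIntegral_intervalIntegral_swap
  exact (hf.continuousOn.integrableOn_compact (isCompact_uIcc.prod isCompact_uIcc)).mono_set
    (Set.prod_mono Set.uIoc_subset_uIcc Set.uIoc_subset_uIcc)

/-- The `(m, n)` cosine coefficient of `w` over the torus `[-π, π]²`, not normalised. -/
def cosCoeff (w : ℝ → ℝ → ℝ) (m n : ℕ) : ℝ :=
  ∫ y in (-π)..π, (∫ x in (-π)..π, w x y * cos (m * x)) * cos (n * y)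

theorem cosCoeff_eq_swap {w : ℝ → ℝ → ℝ} (hw : Continuous fun p : ℝ × ℝ => w p.1 p.2) (m n : ℕ) :
    cosCoeff w m n = ∫ x in (-π)..π, (∫ y in (-π)..π, w x y * cos (n * y)) * cos (m * x) := by
  unfold cosCoeff
  simp_rw [← intervalIntegral.integral_mul_const]
  rw [integral_swap_of_continuous (f := fun y x => w x y * cos (m * x) * cos (n * y))]
  · simp_rw [mul_right_comm]
  · have : Continuous fun p : ℝ × ℝ => w p.2 p.1 := hw.comp continuous_swap
    fun_prop

theorem continuous_partial_cosCoeff {w : ℝ → ℝ → ℝ} (hw : Continuous fun p : ℝ × ℝ => w p.1 p.2) (m : ℕ) :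
    Continuous fun y => ∫ x in (-π)..π, w x y * cos (m * x) := by
  apply intervalIntegral.continuous_parametric_intervalIntegral_of_continuous'
  have : Continuous fun p : ℝ × ℝ => w p.2 p.1 := hw.comp continuous_swap
  simp only [Function.uncurry_def]
  fun_prop

theorem cosCoeff_add {v w : ℝ → ℝ → ℝ} (hv : Continuous fun p : ℝ × ℝ => v p.1 p.2)
    (hw : Continuous fun p : ℝ × ℝ => w p.1 p.2) (m n : ℕ) :
    cosCoeff (fun x y => v x y + w x y) m n = cosCoeff v m n + cosCoeff w m n := by
  unfold cosCoeff
  have h1 := continuous_partial_cosCoeff hv m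
  have h2 := continuous_partial_cosCoeff hw m
  rw [← intervalIntegral.integral_add (Continuous.intervalIntegrable (by fun_prop) _ _)
    (Continuous.intervalIntegrable (by fun_prop) _ _)]
  congr 1; ext y
  rw [← add_mul, ← intervalIntegral.integral_add]
  · simp_rw [add_mul]
  · have : Continuous fun x => v x y := hv.comp (by fun_prop : Continuous fun x : ℝ => (x, y))
    exact Continuous.intervalIntegrable (by fun_prop) _ _
  · have : Continuous fun x => w x y := hw.comp (by fun_prop : Continuous fun x : ℝ => (x, y))
    exact Continuous.intervalIntegrable (by fun_prop) _ _

theorem cosCoeff_const_mul (c : ℝ) (w : ℝ → ℝ → ℝ) (m n : ℕ) :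
    cosCoeff (fun x y => c * w x y) m n = c * cosCoeff w m n := by
  unfold cosCoeff
  simp_rw [mul_assoc, intervalIntegral.integral_const_mul, mul_assoc,
    intervalIntegral.integral_const_mul]

theorem cosCoeff_cos_cos : cosCoeff (fun x y => cos x * cos y) 1 1 = π ^ 2 := by
  have h : ∫ x in (-π)..π, cos x ^ 2 = π := by
    rw [integral_cos_sq]; simp
  have h' : ∀ y, ∫ x in (-π)..π, cos x * cos y * cos ((1 : ℕ) * x) = cos y * π := by
    intro y
    calc _ = ∫ x in (-π)..π, cos y * cos x ^ 2 := by congr 1; ext x; simp; ring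
      _ = _ := by rw [intervalIntegral.integral_const_mul, h]
  unfold cosCoeff
  simp_rw [h']
  calc _ = ∫ y in (-π)..π, π * cos y ^ 2 := by congr 1; ext y; simp; ring
    _ = _ := by rw [intervalIntegral.integral_const_mul, h, sq]

/-- Fourier uniqueness on the torus for functions even in each variable. -/
theorem eq_zero_of_cosCoeff {w : ℝ → ℝ → ℝ} (hw : Continuous fun p : ℝ × ℝ => w p.1 p.2)
    (hper : DblPeriodic w) (hsym : SymFun w) (h0 : ∀ m n, cosCoeff w m n = 0) (x y : ℝ) :
    w x y = 0 := by
  refine eq_zero_of_cos_coeff (f := fun x => w x y)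
    (hw.comp (by fun_prop : Continuous fun x : ℝ => (x, y)))
    (fun x => (hper x y).1) (fun x => (hsym x y).1) (fun m => ?_) x
  exact eq_zero_of_cos_coeff (continuous_partial_cosCoeff hw m)
    (fun y => by simp only [(hper _ y).2]) (fun y => by simp only [(hsym _ y).2])
    (fun n => h0 m n) y

/-- A solution of `w_xx + w_yy + 2w = 0` on the torus has only the coefficients with
`m² + n² = 2`. Partial derivatives are supplied as explicit functions. -/
theorem cosCoeff_eq_zero_of_pde {w wx wxx wy wyy : ℝ → ℝ → ℝ}
    (hw : Continuous fun p : ℝ × ℝ => w p.1 p.2)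
    (hwxx : Continuous fun p : ℝ × ℝ => wxx p.1 p.2)
    (hwyy : Continuous fun p : ℝ × ℝ => wyy p.1 p.2)
    (h1 : ∀ x y, HasDerivAt (fun s => w s y) (wx x y) x)
    (h2 : ∀ x y, HasDerivAt (fun s => wx s y) (wxx x y) x)
    (h3 : ∀ x y, HasDerivAt (fun s => w x s) (wy x y) y)
    (h4 : ∀ x y, HasDerivAt (fun s => wy x s) (wyy x y) y)
    (hper : DblPeriodic w) (heq : ∀ x y, wxx x y + wyy x y = -2 * w x y)
    {m n : ℕ} (hmn : ¬(m = 1 ∧ n = 1)) : cosCoeff w m n = 0 := by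
  have exx : cosCoeff wxx m n = -(m : ℝ) ^ 2 * cosCoeff w m n := by
    have : ∀ y, _ := fun y => integral_second_deriv_mul_cos (fun x => h1 x y) (fun x => h2 x y)
      (hwxx.comp (by fun_prop : Continuous fun x : ℝ => (x, y))) (fun x => (hper x y).1) m
    simp_rw [cosCoeff, this, mul_assoc, intervalIntegral.integral_const_mul]
  have eyy : cosCoeff wyy m n = -(n : ℝ) ^ 2 * cosCoeff w m n := by
    have : ∀ x, _ := fun x => integral_second_deriv_mul_cos (fun y => h3 x y) (fun y => h4 x y)
      (hwyy.comp (by fun_prop : Continuous fun y : ℝ => (x, y))) (fun y => (hper x y).2) n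
    simp_rw [cosCoeff_eq_swap hwyy, cosCoeff_eq_swap hw, this, mul_assoc,
      intervalIntegral.integral_const_mul]
  have hsum := cosCoeff_add hwxx hwyy m n
  simp_rw [heq, cosCoeff_const_mul, exx, eyy] at hsum
  have hprod : ((m : ℝ) ^ 2 + (n : ℝ) ^ 2 - 2) * cosCoeff w m n = 0 := by linarith
  refine (mul_eq_zero.1 hprod).resolve_left fun h => hmn ?_
  have h' : m ^ 2 + n ^ 2 = 2 := by
    have : (m : ℝ) ^ 2 + (n : ℝ) ^ 2 = 2 := by linarith
    exact_mod_cast this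
  have hm : m < 2 := by nlinarith
  have hn : n < 2 := by nlinarith
  interval_cases m <;> interval_cases n <;> simp_all

/-- A smooth function on the plane has smooth partial derivative in the first variable. -/
theorem Smooth2.partial_fst {u : ℝ → ℝ → ℝ} (hs : Smooth2 u) :
    Smooth2 (fun x y => deriv (fun s => u s y) x) ∧
      ∀ x y, HasDerivAt (fun s => u s y) (deriv (fun s => u s y) x) x := by
  have hd : ∀ x y, HasDerivAt (fun s => u s y)
      (fderiv ℝ (fun p : ℝ × ℝ => u p.1 p.2) (x, y) (1, 0)) x := by
    intro x y
    have hf := (hs.differentiable (by simp) (x, y)).hasFDerivAt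
    exact hf.comp_hasDerivAt x ((hasDerivAt_id x).prodMk (hasDerivAt_const x y))
  refine ⟨?_, fun x y => (hd x y).differentiableAt.hasDerivAt⟩
  simp_rw [fun x y => (hd x y).deriv]
  exact (hs.fderiv_right (m := (⊤ : ℕ∞)) (by simp)).clm_apply contDiff_const

/-- A smooth function on the plane has smooth partial derivative in the second variable. -/
theorem Smooth2.partial_snd {u : ℝ → ℝ → ℝ} (hs : Smooth2 u) :
    Smooth2 (fun x y => deriv (fun s => u x s) y) ∧
      ∀ x y, HasDerivAt (fun s => u x s) (deriv (fun s => u x s) y) y := by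
  have hs' : Smooth2 (fun y x => u x y) := hs.comp (contDiff_snd.prodMk contDiff_fst)
  exact ⟨hs'.partial_fst.1.comp (contDiff_snd.prodMk contDiff_fst),
    fun x y => hs'.partial_fst.2 y x⟩

/-- In the class of symmetric doubly 2π-periodic functions, the kernel of −Δ − 2 is
one-dimensional, spanned by cos x cos y. -/
theorem kernel_one_dimensional_symmetric (u : ℝ → ℝ → ℝ)
    (hs : Smooth2 u) (hper : DblPeriodic u) (hsym : SymFun u)
    (heq : ∀ x y : ℝ, lap u x y + 2 * u x y = 0) :
    ∃ α : ℝ, ∀ x y : ℝ, u x y = α * Real.cos x * Real.cos y := by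
  obtain ⟨sx, dx⟩ := hs.partial_fst
  obtain ⟨sxx, dxx⟩ := sx.partial_fst
  obtain ⟨sy, dy⟩ := hs.partial_snd
  obtain ⟨syy, dyy⟩ := sy.partial_snd
  set α : ℝ := cosCoeff u 1 1 / π ^ 2 with hα
  refine ⟨α, fun x y => ?_⟩
  let w : ℝ → ℝ → ℝ := fun x y => u x y + -α * (cos x * cos y)
  have hcc : Continuous fun p : ℝ × ℝ => -α * (cos p.1 * cos p.2) := by fun_prop
  have hwc : Continuous fun p : ℝ × ℝ => w p.1 p.2 := hs.continuous.add hcc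
  have hwper : DblPeriodic w := fun x y => by simp [w, (hper x y).1, (hper x y).2]
  have hwsym : SymFun w := fun x y => by simp [w, (hsym x y).1, (hsym x y).2]
  have hw0 : ∀ m n, cosCoeff w m n = 0 := by
    intro m n
    by_cases hmn : m = 1 ∧ n = 1
    · obtain ⟨rfl, rfl⟩ := hmn
      have hpi : π ^ 2 ≠ 0 := by positivity
      rw [cosCoeff_add hs.continuous hcc, cosCoeff_const_mul, cosCoeff_cos_cos, hα]
      field_simp
      ring
    · refine cosCoeff_eq_zero_of_pde (w := w)
        (wx := fun x y => deriv (fun s => u s y) x + -α * (-sin x * cos y))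
        (wxx := fun x y => deriv (fun t => deriv (fun s => u s y) t) x + -α * (-cos x * cos y))
        (wy := fun x y => deriv (fun s => u x s) y + -α * (cos x * -sin y))
        (wyy := fun x y => deriv (fun t => deriv (fun s => u x s) t) y + -α * (cos x * -cos y))
        hwc (sxx.continuous.add (by fun_prop)) (syy.continuous.add (by fun_prop))
        (fun x y => (dx x y).add (((hasDerivAt_cos x).mul_const _).const_mul _))
        (fun x y => (dxx x y).add (((hasDerivAt_sin x).neg.mul_const _).const_mul _))
        (fun x y => (dy x y).add (((hasDerivAt_cos y).const_mul _).const_mul _))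
        (fun x y => (dyy x y).add (((hasDerivAt_sin y).neg.const_mul _).const_mul _))
        hwper (fun x y => ?_) hmn
      have := heq x y
      simp only [lap] at this
      simp only [w]
      linarith
  have := eq_zero_of_cosCoeff hwc hwper hwsym hw0 x y
  simp only [w] at this
  linarith
end
end

section
/- Let V : ℝ² → ℝ be a continuous, doubly 2π-periodic, symmetric function, let d, c ∈ ℝ, and let v, w : ℝ² → ℝ be smooth, doubly 2π-periodic, symmetric functions with v(x,y) > 0 and w(x,y) > 0 for all (x,y), satisfying −Δv + dv = Vv and −Δw + cw = Vw on ℝ². Then d = c, and there exists α > 0 such that v = αw; that is, positive periodic eigenfunctions of the Schrödinger operator −Δ − V correspond to the same eigenvalue and are proportional. -/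
/-!
The proof rests on one consequence of the divergence theorem: if `F`, `G` are smooth and doubly
`2π`-periodic and `F_x + G_y ≥ 0` everywhere, then `F_x + G_y = 0` everywhere, because its integral
over a period square vanishes (`divergence_eq_zero`).

With `P = w ∇v - v ∇w` the two equations give `div P = w Δv - v Δw = (d - c) v w`, which has a
constant sign; so it vanishes and `d = c`. Put `h = v / w`, so that `P = w² ∇h` is now
divergence-free. Then `div (h P) = ∇h · P = w² |∇h|² ≥ 0`, so it vanishes as well, `∇h = 0`,
and `h` is a positive constant.
-/

noncomputable section
open Real

/-- Directional derivative of `f` at `p` along `e`. -/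
def dirD (e : ℝ × ℝ) (f : ℝ × ℝ → ℝ) (p : ℝ × ℝ) : ℝ := fderiv ℝ f p e

/-- Double `2π`-periodicity for functions on `ℝ × ℝ`. -/
def Per2 (f : ℝ × ℝ → ℝ) : Prop :=
  ∀ p, f (p + (2 * π, 0)) = f p ∧ f (p + (0, 2 * π)) = f p

lemma contDiff_dirD {f : ℝ × ℝ → ℝ} (hf : ContDiff ℝ (⊤ : ℕ∞) f) (e : ℝ × ℝ) :
    ContDiff ℝ (⊤ : ℕ∞) (dirD e f) := by
  have h : ContDiff ℝ (⊤ : ℕ∞) (fderiv ℝ f) := hf.fderiv_right (by simp)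
  exact h.clm_apply contDiff_const

lemma smooth_differentiable {f : ℝ × ℝ → ℝ} (hf : ContDiff ℝ (⊤ : ℕ∞) f) :
    Differentiable ℝ f := hf.differentiable (by simp)

lemma dirD_mul {f g : ℝ × ℝ → ℝ} (hf : ContDiff ℝ (⊤ : ℕ∞) f) (hg : ContDiff ℝ (⊤ : ℕ∞) g)
    (e p : ℝ × ℝ) :
    dirD e (fun q => f q * g q) p = f p * dirD e g p + g p * dirD e f p := by
  unfold dirD
  rw [fderiv_fun_mul (smooth_differentiable hf p) (smooth_differentiable hg p)]
  simp

lemma dirD_sub {f g : ℝ × ℝ → ℝ} (hf : ContDiff ℝ (⊤ : ℕ∞) f) (hg : ContDiff ℝ (⊤ : ℕ∞) g)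
    (e p : ℝ × ℝ) :
    dirD e (fun q => f q - g q) p = dirD e f p - dirD e g p := by
  unfold dirD
  rw [fderiv_fun_sub (smooth_differentiable hf p) (smooth_differentiable hg p)]
  simp

lemma Per2.dirD {f : ℝ × ℝ → ℝ} (hf : Per2 f) (e : ℝ × ℝ) : Per2 (dirD e f) := by
  have key : ∀ a : ℝ × ℝ, (∀ p, f (p + a) = f p) → ∀ p, _root_.dirD e f (p + a) =
      _root_.dirD e f p := by
    intro a ha p
    unfold _root_.dirD
    rw [← fderiv_comp_add_right a]
    simp only [ha]
  exact fun p => ⟨key _ (fun q => (hf q).1) p, key _ (fun q => (hf q).2) p⟩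

lemma deriv_fst {f : ℝ × ℝ → ℝ} (hf : Differentiable ℝ f) (x y : ℝ) :
    deriv (fun s => f (s, y)) x = dirD (1, 0) f (x, y) := by
  have h : HasDerivAt (fun s : ℝ => (s, y)) ((1 : ℝ), (0 : ℝ)) x :=
    (hasDerivAt_id x).prodMk (hasDerivAt_const x y)
  exact ((hf (x, y)).hasFDerivAt.comp_hasDerivAt x h).deriv

lemma deriv_snd {f : ℝ × ℝ → ℝ} (hf : Differentiable ℝ f) (x y : ℝ) :
    deriv (fun s => f (x, s)) y = dirD (0, 1) f (x, y) := by
  have h : HasDerivAt (fun s : ℝ => (x, s)) ((0 : ℝ), (1 : ℝ)) y :=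
    (hasDerivAt_const y x).prodMk (hasDerivAt_id y)
  exact ((hf (x, y)).hasFDerivAt.comp_hasDerivAt y h).deriv

lemma lap_eq {u : ℝ → ℝ → ℝ} (hu : Smooth2 u) (p : ℝ × ℝ) :
    lap u p.1 p.2 = dirD (1, 0) (dirD (1, 0) fun q => u q.1 q.2) p
      + dirD (0, 1) (dirD (0, 1) fun q => u q.1 q.2) p := by
  unfold lap
  have h1 : ∀ t, deriv (fun s => u s p.2) t = dirD (1, 0) (fun q => u q.1 q.2) (t, p.2) :=
    fun t => deriv_fst (smooth_differentiable hu) t p.2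
  have h2 : ∀ t, deriv (fun s => u p.1 s) t = dirD (0, 1) (fun q => u q.1 q.2) (p.1, t) :=
    fun t => deriv_snd (smooth_differentiable hu) p.1 t
  simp only [h1, h2]
  rw [deriv_fst (smooth_differentiable (contDiff_dirD hu _)),
    deriv_snd (smooth_differentiable (contDiff_dirD hu _))]

/-- A periodic divergence that is nonnegative vanishes: its integral over the period square with
corner `p` is zero by the divergence theorem. -/
lemma divergence_eq_zero {F G : ℝ × ℝ → ℝ} (hF : ContDiff ℝ (⊤ : ℕ∞) F)
    (hG : ContDiff ℝ (⊤ : ℕ∞) G) (hFp : Per2 F) (hGp : Per2 G)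
    (hpos : ∀ p, 0 ≤ dirD (1, 0) F p + dirD (0, 1) G p) (p : ℝ × ℝ) :
    dirD (1, 0) F p + dirD (0, 1) G p = 0 := by
  obtain ⟨a, b⟩ := p
  set k : ℝ × ℝ → ℝ := fun p => dirD (1, 0) F p + dirD (0, 1) G p with hk
  have hkc : Continuous k := (contDiff_dirD hF _).continuous.add (contDiff_dirD hG _).continuous
  have hpi : 0 < 2 * π := by positivity
  have hint : ∫ x in a..a + 2 * π, ∫ y in b..b + 2 * π, k (x, y) = 0 := by
    have h := MeasureTheory.integral2_divergence_prod_of_hasFDerivAt_off_countable F G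
      (fderiv ℝ F) (fderiv ℝ G) a b (a + 2 * π) (b + 2 * π) ∅ Set.countable_empty
      hF.continuous.continuousOn hG.continuous.continuousOn
      (fun x _ => (smooth_differentiable hF x).hasFDerivAt)
      (fun x _ => (smooth_differentiable hG x).hasFDerivAt)
      (hkc.continuousOn.integrableOn_compact (isCompact_uIcc.prod isCompact_uIcc))
    have e1 : ∀ y, F (a + 2 * π, y) = F (a, y) := fun y => by simpa using (hFp (a, y)).1
    have e2 : ∀ x, G (x, b + 2 * π) = G (x, b) := fun x => by simpa using (hGp (x, b)).2
    simp only [e1, e2, sub_self, zero_add] at h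
    exact h
  by_contra hne
  have hlt : 0 < k (a, b) := lt_of_le_of_ne (hpos _) (Ne.symm hne)
  have hin : 0 < ∫ y in b..b + 2 * π, k (a, y) :=
    intervalIntegral.integral_pos (by linarith)
      (hkc.comp (Continuous.prodMk_right a)).continuousOn (fun y _ => hpos _)
      ⟨b, ⟨le_rfl, by linarith⟩, hlt⟩
  have hout : 0 < ∫ x in a..a + 2 * π, ∫ y in b..b + 2 * π, k (x, y) :=
    intervalIntegral.integral_pos (by linarith)
      (intervalIntegral.continuous_parametric_intervalIntegral_of_continuous'
        (f := fun x y => k (x, y)) hkc b (b + 2 * π)).continuousOn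
      (fun x _ => intervalIntegral.integral_nonneg (by linarith) fun y _ => hpos _)
      ⟨a, ⟨le_rfl, by linarith⟩, hin⟩
  exact hout.ne' hint

/-- The component along `e` of `w ∇v - v ∇w`. -/
def wron (e : ℝ × ℝ) (v w : ℝ × ℝ → ℝ) (p : ℝ × ℝ) : ℝ := w p * dirD e v p - v p * dirD e w p

lemma contDiff_wron {v w : ℝ × ℝ → ℝ} (hv : ContDiff ℝ (⊤ : ℕ∞) v)
    (hw : ContDiff ℝ (⊤ : ℕ∞) w) (e : ℝ × ℝ) : ContDiff ℝ (⊤ : ℕ∞) (wron e v w) :=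
  (hw.mul (contDiff_dirD hv e)).sub (hv.mul (contDiff_dirD hw e))

lemma per2_wron {v w : ℝ × ℝ → ℝ} (hv : Per2 v) (hw : Per2 w) (e : ℝ × ℝ) :
    Per2 (wron e v w) := by
  intro p
  simp only [wron, (hv p).1, (hv p).2, (hw p).1, (hw p).2, (hv.dirD e p).1, (hv.dirD e p).2,
    (hw.dirD e p).1, (hw.dirD e p).2, and_self]

lemma dirD_wron {v w : ℝ × ℝ → ℝ} (hv : ContDiff ℝ (⊤ : ℕ∞) v)
    (hw : ContDiff ℝ (⊤ : ℕ∞) w) (e p : ℝ × ℝ) :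
    dirD e (wron e v w) p = w p * dirD e (dirD e v) p - v p * dirD e (dirD e w) p := by
  have h := dirD_sub (hw.mul (contDiff_dirD hv e)) (hv.mul (contDiff_dirD hw e)) e p
  rw [dirD_mul hw (contDiff_dirD hv e), dirD_mul hv (contDiff_dirD hw e)] at h
  refine h.trans ?_
  ring

/-- Applied with `a = ±(d - c)`, whichever is nonnegative, this gives `d = c`. -/
lemma eigenvalue_gap_eq_zero {v w : ℝ × ℝ → ℝ} {a : ℝ} (hv : ContDiff ℝ (⊤ : ℕ∞) v)
    (hw : ContDiff ℝ (⊤ : ℕ∞) w) (hvp : Per2 v) (hwp : Per2 w)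
    (hv0 : ∀ p, 0 < v p) (hw0 : ∀ p, 0 < w p) (ha : 0 ≤ a)
    (hdiv : ∀ p, dirD (1, 0) (wron (1, 0) v w) p + dirD (0, 1) (wron (0, 1) v w) p
      = a * (v p * w p)) : a = 0 := by
  have hvw : ∀ p, 0 < v p * w p := fun p => mul_pos (hv0 p) (hw0 p)
  have h := divergence_eq_zero (contDiff_wron hv hw _) (contDiff_wron hv hw _)
    (per2_wron hvp hwp _) (per2_wron hvp hwp _)
    (fun p => by rw [hdiv]; exact mul_nonneg ha (hvw p).le) 0
  rw [hdiv] at h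
  exact (mul_eq_zero.mp h).resolve_right (hvw 0).ne'

/-- If `w ∇v - v ∇w = w² ∇(v / w)` is divergence-free, then multiplying it by `v / w` gives a
periodic field with divergence `w² |∇(v / w)|² ≥ 0`, which must vanish. -/
lemma quotient_const {v w : ℝ × ℝ → ℝ} (hv : ContDiff ℝ (⊤ : ℕ∞) v)
    (hw : ContDiff ℝ (⊤ : ℕ∞) w) (hvp : Per2 v) (hwp : Per2 w) (hw0 : ∀ p, 0 < w p)
    (hdiv : ∀ p, dirD (1, 0) (wron (1, 0) v w) p + dirD (0, 1) (wron (0, 1) v w) p = 0)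
    (p q : ℝ × ℝ) : v p / w p = v q / w q := by
  set h : ℝ × ℝ → ℝ := fun p => v p / w p with hh
  have hs : ContDiff ℝ (⊤ : ℕ∞) h := hv.div hw fun p => (hw0 p).ne'
  have hp : Per2 h := fun p => by
    simp only [hh, (hvp p).1, (hvp p).2, (hwp p).1, (hwp p).2, and_self]
  have hvh : v = fun p => h p * w p := funext fun p => (div_mul_cancel₀ _ (hw0 p).ne').symm
  have hwr : ∀ e p, wron e v w p = w p ^ 2 * dirD e h p := by
    intro e p
    have h1 : dirD e v p = h p * dirD e w p + w p * dirD e h p := by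
      conv_lhs => rw [hvh]
      exact dirD_mul hs hw e p
    have h2 : v p = h p * w p := congrFun hvh p
    rw [wron, h1, h2]
    ring
  have hP : ∀ e, Per2 fun p => h p * wron e v w p := fun e p => by
    simp only [(hp p).1, (hp p).2, (per2_wron hvp hwp e p).1, (per2_wron hvp hwp e p).2, and_self]
  have hD : ∀ p, dirD (1, 0) (fun p => h p * wron (1, 0) v w p) p
      + dirD (0, 1) (fun p => h p * wron (0, 1) v w p) p
      = w p ^ 2 * (dirD (1, 0) h p ^ 2 + dirD (0, 1) h p ^ 2) := by
    intro p
    rw [dirD_mul hs (contDiff_wron hv hw _), dirD_mul hs (contDiff_wron hv hw _), hwr, hwr]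
    linear_combination h p * hdiv p
  have hz := divergence_eq_zero (hs.mul (contDiff_wron hv hw (1, 0)))
    (hs.mul (contDiff_wron hv hw (0, 1))) (hP _) (hP _)
    (fun p => by rw [hD]; positivity)
  refine is_const_of_fderiv_eq_zero (𝕜 := ℝ) (smooth_differentiable hs) (fun r => ?_) p q
  have h0 := hz r
  rw [hD] at h0
  have h1 := (mul_eq_zero.mp h0).resolve_left (pow_pos (hw0 r) 2).ne'
  have hx : fderiv ℝ h r (1, 0) = 0 := by
    change dirD (1, 0) h r = 0
    nlinarith [sq_nonneg (dirD (1, 0) h r), sq_nonneg (dirD (0, 1) h r)]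
  have hy : fderiv ℝ h r (0, 1) = 0 := by
    change dirD (0, 1) h r = 0
    nlinarith [sq_nonneg (dirD (1, 0) h r), sq_nonneg (dirD (0, 1) h r)]
  ext <;> simp [hx, hy]

/-- Positive doubly periodic symmetric eigenfunctions of the Schrödinger operator −Δ − V
correspond to the same eigenvalue and are proportional. -/
theorem positive_eigenfunctions_proportional (V : ℝ → ℝ → ℝ)
    (hVc : Continuous fun p : ℝ × ℝ => V p.1 p.2)
    (hVper : DblPeriodic V) (hVsym : SymFun V)
    (d c : ℝ) (v w : ℝ → ℝ → ℝ)
    (hvs : Smooth2 v) (hvper : DblPeriodic v) (hvsym : SymFun v)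
    (hws : Smooth2 w) (hwper : DblPeriodic w) (hwsym : SymFun w)
    (hvpos : ∀ x y : ℝ, 0 < v x y) (hwpos : ∀ x y : ℝ, 0 < w x y)
    (hveq : ∀ x y : ℝ, -(lap v x y) + d * v x y = V x y * v x y)
    (hweq : ∀ x y : ℝ, -(lap w x y) + c * w x y = V x y * w x y) :
    d = c ∧ ∃ α : ℝ, 0 < α ∧ ∀ x y : ℝ, v x y = α * w x y := by
  set v' : ℝ × ℝ → ℝ := fun p => v p.1 p.2 with hv'
  set w' : ℝ × ℝ → ℝ := fun p => w p.1 p.2 with hw'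
  have hvs' : ContDiff ℝ (⊤ : ℕ∞) v' := hvs
  have hws' : ContDiff ℝ (⊤ : ℕ∞) w' := hws
  have hvp : Per2 v' := fun p => by simpa [hv'] using hvper p.1 p.2
  have hwp : Per2 w' := fun p => by simpa [hw'] using hwper p.1 p.2
  have hv0 : ∀ p, 0 < v' p := fun p => hvpos _ _
  have hw0 : ∀ p, 0 < w' p := fun p => hwpos _ _
  have hdiv : ∀ p, dirD (1, 0) (wron (1, 0) v' w') p + dirD (0, 1) (wron (0, 1) v' w') p
      = (d - c) * (v' p * w' p) := by
    intro p
    have h1 := hveq p.1 p.2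
    have h2 := hweq p.1 p.2
    rw [lap_eq hvs] at h1
    rw [lap_eq hws] at h2
    rw [dirD_wron hvs' hws', dirD_wron hvs' hws']
    simp only [hv', hw']
    linear_combination v p.1 p.2 * h2 - w p.1 p.2 * h1
  have hdiv' : ∀ p, dirD (1, 0) (wron (1, 0) w' v') p + dirD (0, 1) (wron (0, 1) w' v') p
      = (c - d) * (w' p * v' p) := by
    intro p
    have h := hdiv p
    rw [dirD_wron hvs' hws', dirD_wron hvs' hws'] at h
    rw [dirD_wron hws' hvs', dirD_wron hws' hvs']
    linear_combination -h
  have hdc : d = c := by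
    rcases le_total c d with hle | hle
    · linarith [eigenvalue_gap_eq_zero hvs' hws' hvp hwp hv0 hw0 (sub_nonneg.mpr hle) hdiv]
    · linarith [eigenvalue_gap_eq_zero hws' hvs' hwp hvp hw0 hv0 (sub_nonneg.mpr hle) hdiv']
  refine ⟨hdc, v' 0 / w' 0, div_pos (hv0 0) (hw0 0), fun x y => ?_⟩
  have hq := quotient_const hvs' hws' hvp hwp hw0
    (fun p => by rw [hdiv, hdc, sub_self, zero_mul]) (x, y) 0
  exact (div_eq_iff (hw0 (x, y)).ne').mp hq
end
end
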